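/- Let ω = (ω₁, ω₂, …) be a nondecreasing sequence of positive reals tending to +∞ and let (n_k) be a sequence of distinct positive integers satisfying Condition A_ω. Then for any f satisfying the stated conditions, N^{-1/2} Σ_{k=1}^N f(n_k x) converges in distribution to the normal law N(0, ‖f‖²) as N → ∞, where x is uniformly distributed on (0,1). -/

import Mathlib

/-!
Write `S F = N^{-1/2} ∑ F(n_k x)`. If `p` is a trigonometric polynomial then, apart from `o(√N)`
indices, Condition `A_ω` says that a product of at most `ω_N` factors `p(n_k x)` only has those
resonances that it would have for independent uniform variables in place of the `n_k x`. Hence every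
moment of `S p` eventually equals the corresponding moment of a normalized i.i.d. sum; the latter is
sub-Gaussian, so Taylor expansion of `exp (itx)` shows that the two characteristic functions
have the same limit, which the i.i.d. central limit theorem provides.

To pass from `p` to `F ∈ L²`, split the Fourier tail `F - p` at the frequency `N^κ`. Below it the
dilates are pairwise orthogonal, so that part of `S (F - p)` has norm at most about `‖F - p‖`; above
it the triangle inequality suffices once the remainder is `o(N^{-1/2})`. Since `κ` may be taken
arbitrarily large, any polynomial decay of the `L²` remainders is enough, and bounded variation
provides it through Fourier coefficients of order `O(1/|j|)`.
-/

open MeasureTheory Filter Real Topology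

noncomputable section

/-- `n k` is among the `N` smallest elements of the sequence `n`. -/
def AmongSmallest (n : ℕ → ℕ) (N : ℕ) (k : ℕ) : Prop :=
  {j : ℕ | n j ≤ n k}.ncard ≤ N

/-- Condition `A_ω` with explicit threshold `N₀`: for every `N ≥ N₀`, every solution of
`a₁ n_{k₁} + … + a_r n_{k_r} = 0` with `2 ≤ r ≤ ω_N`, pairwise distinct indices and nonzero
integer coefficients of absolute value at most `N ^ ω_N` has all `n_{k_i}` among the `N`
smallest elements of the sequence. -/
def CondAWith (ω : ℕ → ℝ) (n : ℕ → ℕ) (N₀ : ℕ) : Prop :=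
  ∀ N : ℕ, N₀ ≤ N →
    ∀ (r : ℕ) (k : Fin r → ℕ) (a : Fin r → ℤ),
      2 ≤ r → (r : ℝ) ≤ ω N →
      Function.Injective k →
      (∀ i, a i ≠ 0) →
      (∀ i, (|a i| : ℝ) ≤ (N : ℝ) ^ ω N) →
      (∑ i, a i * (n (k i) : ℤ)) = 0 →
      ∀ i, AmongSmallest n N (k i)

/-- Condition `A_ω`. -/
def CondA (ω : ℕ → ℝ) (n : ℕ → ℕ) : Prop := ∃ N₀, CondAWith ω n N₀

open AddCircle ProbabilityTheory
open scoped ENNReal NNReal Nat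

section HilbertBasis

variable {ι 𝕜 E : Type*} [RCLike 𝕜] [NormedAddCommGroup E] [InnerProductSpace 𝕜 E]

lemma hasSum_norm_sq_repr (b : HilbertBasis ι 𝕜 E) (x : E) :
    HasSum (fun i => ‖b.repr x i‖ ^ 2) (‖x‖ ^ 2) := by
  have h := lp.hasSum_norm (p := 2) (by norm_num) (b.repr x)
  simpa using h

lemma norm_sub_sum_repr_sq_le (b : HilbertBasis ι 𝕜 E) {x : E} {w : ι → ℝ} {W : ℝ} {s : Finset ι}
    (hW : 0 < W) (hw : ∀ i, 0 ≤ w i) (hWw : ∀ i ∉ s, W ≤ w i)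
    (hsum : Summable fun i => w i * ‖b.repr x i‖ ^ 2) :
    ‖x - ∑ i ∈ s, b.repr x i • b i‖ ^ 2 ≤ (∑' i, w i * ‖b.repr x i‖ ^ 2) / W := by
  classical
  have hrepr (i : ι) : b.repr (x - ∑ i ∈ s, b.repr x i • b i) i
      = if i ∈ s then 0 else b.repr x i := by
    rw [b.repr_apply_apply, inner_sub_right, inner_sum]
    simp only [inner_smul_right, orthonormal_iff_ite.1 b.orthonormal, mul_ite, mul_one, mul_zero,
      Finset.sum_ite_eq]
    split_ifs <;> simp [b.repr_apply_apply]
  refine hasSum_le (fun i => ?_) (hasSum_norm_sq_repr b _) (hsum.hasSum.div_const W)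
  rw [hrepr, le_div_iff₀ hW]
  split_ifs with hi
  · simpa using mul_nonneg (hw i) (sq_nonneg _)
  · rw [mul_comm]
    gcongr
    exact hWw i hi

end HilbertBasis

section Dilation

variable {T : ℝ} [hT : Fact (0 < T)]

lemma measurePreserving_nsmul_haarAddCircle (m : ℕ) [NeZero m] :
    MeasurePreserving (fun x : AddCircle T => m • x) haarAddCircle haarAddCircle := by
  simpa only [natCast_zsmul] using
    Measure.measurePreserving_zsmul haarAddCircle (Nat.cast_ne_zero.2 (NeZero.ne m) : (m : ℤ) ≠ 0)

/-- The isometry `F ↦ F(m·)` of `L²` of the circle. -/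
def dilation (m : ℕ) [NeZero m] :
    Lp ℂ 2 (haarAddCircle (T := T)) →ₗᵢ[ℂ] Lp ℂ 2 (haarAddCircle (T := T)) :=
  Lp.compMeasurePreservingₗᵢ ℂ _ (measurePreserving_nsmul_haarAddCircle m)

lemma coeFn_dilation (m : ℕ) [NeZero m] (F : Lp ℂ 2 (haarAddCircle (T := T))) :
    dilation m F =ᵐ[haarAddCircle] fun x => F (m • x) :=
  Lp.coeFn_compMeasurePreserving F (measurePreserving_nsmul_haarAddCircle m)

omit hT in
lemma fourier_nsmul (j : ℤ) (m : ℕ) (x : AddCircle T) :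
    fourier j (m • x) = fourier (j * m) x := by
  rw [fourier_apply, fourier_apply, mul_smul, natCast_zsmul]

lemma dilation_fourierLp (m : ℕ) [NeZero m] (j : ℤ) :
    dilation m (fourierLp (T := T) 2 j) = fourierLp 2 (j * m) := by
  refine Lp.ext ?_
  filter_upwards [coeFn_dilation m (fourierLp (T := T) 2 j), coeFn_fourierLp (T := T) 2 (j * m),
    (measurePreserving_nsmul_haarAddCircle (T := T) m).quasiMeasurePreserving.ae_eq_comp
      (coeFn_fourierLp (T := T) 2 j)] with x h₁ h₂ h₃
  simp only [Function.comp_apply] at h₃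
  rw [h₁, h₂, h₃, fourier_nsmul]

end Dilation

section Orthogonal

variable {ι 𝕜 E : Type*} [RCLike 𝕜] [NormedAddCommGroup E] [InnerProductSpace 𝕜 E]

lemma norm_sq_sum_of_pairwise_inner_eq_zero {s : Finset ι} {v : ι → E}
    (h : (s : Set ι).Pairwise fun i j => inner 𝕜 (v i) (v j) = 0) :
    ‖∑ i ∈ s, v i‖ ^ 2 = ∑ i ∈ s, ‖v i‖ ^ 2 := by
  classical
  have hdiag (i : ι) (hi : i ∈ s) : inner 𝕜 (v i) (∑ j ∈ s, v j) = inner 𝕜 (v i) (v i) := by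
    rw [inner_sum]
    exact Finset.sum_eq_single_of_mem i hi fun j hj hji => h hi hj hji.symm
  rw [← inner_self_eq_norm_sq (𝕜 := 𝕜), sum_inner, Finset.sum_congr rfl hdiag, map_sum]
  exact Finset.sum_congr rfl fun i _ => inner_self_eq_norm_sq _

end Orthogonal

section NonResonant

variable {ι : Type*}

/-- The integers `n k`, `k ∈ I`, satisfy no nontrivial linear relation with at most `R` nonzero
coefficients, all of absolute value at most `L`. -/
def NonResonant (n : ι → ℕ) (I : Finset ι) (R L : ℕ) : Prop :=
  ∀ b : ι → ℤ, (I.filter fun k => b k ≠ 0).card ≤ R → (∀ k ∈ I, |b k| ≤ L) →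
    ∑ k ∈ I, b k * n k = 0 → ∀ k ∈ I, b k = 0

variable {n : ι → ℕ} {I : Finset ι} {L : ℕ}

lemma NonResonant.mono {R R' L' : ℕ} (h : NonResonant n I R L) (hR : R' ≤ R) (hL : L' ≤ L) :
    NonResonant n I R' L' := fun b h₁ h₂ h₃ =>
  h b (h₁.trans hR) (fun k hk => (h₂ k hk).trans (by exact_mod_cast hL)) h₃

lemma NonResonant.mul_ne_mul (h : NonResonant n I 2 L) {k l : ι} (hk : k ∈ I) (hl : l ∈ I)
    (hkl : k ≠ l) {i j : ℤ} (hi₀ : i ≠ 0) (hi : |i| ≤ L) (hj : |j| ≤ L) :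
    i * n k ≠ j * n l := by
  classical
  intro heq
  let b : ι → ℤ := Pi.single k i - Pi.single l j
  have hbk : b k = i := by simp [b, hkl]
  have hbl : b l = -j := by simp [b, hkl.symm]
  have hb₀ (m : ι) (hmk : m ≠ k) (hml : m ≠ l) : b m = 0 := by simp [b, hmk, hml]
  refine hi₀ (hbk.symm.trans (h b ?_ (fun m _ => ?_) ?_ k hk))
  · have hsub : I.filter (fun m => b m ≠ 0) ⊆ {k, l} := fun m hm => by
      by_contra hne
      simp only [Finset.mem_insert, Finset.mem_singleton, not_or] at hne
      exact (Finset.mem_filter.1 hm).2 (hb₀ m hne.1 hne.2)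
    exact (Finset.card_le_card hsub).trans Finset.card_le_two
  · rcases eq_or_ne m k with rfl | hmk
    · rwa [hbk]
    rcases eq_or_ne m l with rfl | hml
    · rwa [hbl, abs_neg]
    · simp [hb₀ m hmk hml]
  · simp [b, sub_mul, Finset.sum_sub_distrib, Pi.single_apply, hk, hl, heq]

variable {T : ℝ} [hT : Fact (0 < T)] [∀ k, NeZero (n k)]

lemma NonResonant.norm_sum_dilation_sq (h : NonResonant n I 2 L) {J : Finset ℤ}
    (hJ₀ : 0 ∉ J) (hJ : ∀ j ∈ J, |j| ≤ L) (c : ℤ → ℂ) :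
    ‖∑ k ∈ I, dilation (n k) (∑ j ∈ J, c j • fourierLp (T := T) 2 j)‖ ^ 2
      = I.card * ‖∑ j ∈ J, c j • fourierLp (T := T) 2 j‖ ^ 2 := by
  rw [norm_sq_sum_of_pairwise_inner_eq_zero (𝕜 := ℂ)]
  · simp only [LinearIsometry.norm_map, Finset.sum_const, nsmul_eq_mul]
  intro k hk l hl hkl
  simp only [map_sum, map_smul, dilation_fourierLp, sum_inner]
  refine Finset.sum_eq_zero fun i hi => ?_
  rw [inner_sum]
  refine Finset.sum_eq_zero fun j hj => ?_
  rw [inner_smul_left, inner_smul_right, orthonormal_fourier.inner_eq_zero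
    (h.mul_ne_mul hk hl hkl (ne_of_mem_of_not_mem hi hJ₀) (hJ i hi) (hJ j hj)), mul_zero, mul_zero]

end NonResonant

section FourierPartialSum

variable {T : ℝ} [hT : Fact (0 < T)]

/-- The `M`-th symmetric partial sum of the Fourier series of `F`. -/
def fourierPartialSum (F : AddCircle T → ℂ) (M : ℕ) : C(AddCircle T, ℂ) :=
  ∑ j ∈ Finset.Icc (-M : ℤ) M, fourierCoeff F j • fourier j

/-- The `M`-th symmetric partial sum of the Fourier series of `F`, as an element of `L²`. -/
def fourierPartialSumLp (F : Lp ℂ 2 (haarAddCircle (T := T))) (M : ℕ) :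
    Lp ℂ 2 (haarAddCircle (T := T)) :=
  ∑ j ∈ Finset.Icc (-M : ℤ) M, fourierCoeff F j • fourierLp 2 j

lemma coeFn_fourierPartialSumLp (F : Lp ℂ 2 (haarAddCircle (T := T))) (M : ℕ) :
    fourierPartialSumLp F M =ᵐ[haarAddCircle] fourierPartialSum F M := by
  have h : fourierPartialSumLp F M = (fourierPartialSum F M).toLp 2 haarAddCircle ℂ := by
    simp only [fourierPartialSumLp, fourierPartialSum, map_sum, map_smul, fourierLp]
  rw [h]
  exact ContinuousMap.coeFn_toLp haarAddCircle _

lemma norm_sub_fourierPartialSumLp_sq_le {s : ℝ} (hs : 0 ≤ s)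
    {F : Lp ℂ 2 (haarAddCircle (T := T))}
    (hF : Summable fun j : ℤ => |(j : ℝ)| ^ (2 * s) * ‖fourierCoeff F j‖ ^ 2) (M : ℕ) :
    ‖F - fourierPartialSumLp F M‖ ^ 2
      ≤ (∑' j : ℤ, |(j : ℝ)| ^ (2 * s) * ‖fourierCoeff F j‖ ^ 2) / (M + 1 : ℝ) ^ (2 * s) := by
  have hfar (j : ℤ) (hj : j ∉ Finset.Icc (-M : ℤ) M) :
      (M + 1 : ℝ) ^ (2 * s) ≤ |(j : ℝ)| ^ (2 * s) := by
    rw [Finset.mem_Icc, ← abs_le, not_le] at hj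
    refine rpow_le_rpow (by positivity) ?_ (by positivity)
    exact_mod_cast hj
  have h := norm_sub_sum_repr_sq_le (fourierBasis (T := T)) (x := F)
    (w := fun j : ℤ => |(j : ℝ)| ^ (2 * s)) (W := (M + 1 : ℝ) ^ (2 * s)) (by positivity)
    (fun j => by positivity) hfar
  simp only [fourierBasis_repr, coe_fourierBasis] at h
  exact h hF

lemma NonResonant.norm_sum_dilation_sub_le {ι : Type*} {n : ι → ℕ} [∀ k, NeZero (n k)]
    {I : Finset ι} {L : ℕ} (h : NonResonant n I 2 L) (F : Lp ℂ 2 (haarAddCircle (T := T)))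
    {M : ℕ} (hM : M ≤ L) :
    ‖∑ k ∈ I, dilation (n k) (F - fourierPartialSumLp F M)‖
      ≤ √I.card * ‖F - fourierPartialSumLp F M‖
        + 2 * I.card * ‖F - fourierPartialSumLp F L‖ := by
  set far := F - fourierPartialSumLp F L with hfar
  set mid := fourierPartialSumLp F L - fourierPartialSumLp F M with hmid
  have hmid_norm : ‖∑ k ∈ I, dilation (n k) mid‖ = √I.card * ‖mid‖ := by
    have hJ : Finset.Icc (-M : ℤ) M ⊆ Finset.Icc (-L : ℤ) L :=
      Finset.Icc_subset_Icc (by simpa using hM) (by simpa using hM)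
    rw [hmid, fourierPartialSumLp, fourierPartialSumLp, ← Finset.sum_sdiff_eq_sub hJ,
      ← sq_eq_sq₀ (norm_nonneg _) (by positivity), mul_pow, sq_sqrt (Nat.cast_nonneg _)]
    exact h.norm_sum_dilation_sq (by simp)
      (fun j hj => abs_le.2 (Finset.mem_Icc.1 (Finset.mem_sdiff.1 hj).1)) _
  have hfar_norm : ‖∑ k ∈ I, dilation (n k) far‖ ≤ I.card * ‖far‖ := by
    refine (norm_sum_le _ _).trans_eq ?_
    simp only [LinearIsometry.norm_map, Finset.sum_const, nsmul_eq_mul]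
  have hsplit : F - fourierPartialSumLp F M = far + mid := by rw [hfar, hmid]; abel
  have hmid_le : ‖mid‖ ≤ ‖F - fourierPartialSumLp F M‖ + ‖far‖ := by
    rw [eq_sub_of_add_eq' hsplit.symm]
    exact norm_sub_le _ _
  have hcard : √(I.card : ℝ) ≤ I.card := by
    rw [sqrt_le_left (Nat.cast_nonneg _)]
    exact_mod_cast Nat.le_self_pow two_ne_zero _
  calc ‖∑ k ∈ I, dilation (n k) (F - fourierPartialSumLp F M)‖
      = ‖∑ k ∈ I, dilation (n k) far + ∑ k ∈ I, dilation (n k) mid‖ := by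
        rw [hsplit]; simp only [map_add, Finset.sum_add_distrib]
    _ ≤ I.card * ‖far‖ + √I.card * (‖F - fourierPartialSumLp F M‖ + ‖far‖) := by
        refine (norm_add_le _ _).trans (add_le_add hfar_norm ?_)
        rw [hmid_norm]
        gcongr
    _ ≤ I.card * ‖far‖ + (√I.card * ‖F - fourierPartialSumLp F M‖ + I.card * ‖far‖) := by
        rw [mul_add]
        gcongr
    _ = √I.card * ‖F - fourierPartialSumLp F M‖ + 2 * I.card * ‖far‖ := by ring

end FourierPartialSum

section Moments

variable {T : ℝ}

lemma fourier_sum {α : Type*} (s : Finset α) (b : α → ℤ) (x : AddCircle T) :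
    fourier (∑ i ∈ s, b i) x = ∏ i ∈ s, fourier (b i) x := by
  classical
  induction s using Finset.induction_on with
  | empty => simp
  | insert i s hi ih => rw [Finset.sum_insert hi, Finset.prod_insert hi, fourier_add, ih]

variable {ι : Type*} [DecidableEq ι] {q : ℕ}

/-- In a product of `q` characters, the `i`-th one having frequency `(v i).2` and being evaluated
at the variable with index `(v i).1`, the total frequency attached to the index `k`. -/
def totalFrequency (v : Fin q → ι × ℤ) (k : ι) : ℤ :=
  ∑ i with (v i).1 = k, (v i).2

lemma card_filter_totalFrequency_ne_zero_le (v : Fin q → ι × ℤ) (I : Finset ι) :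
    (I.filter fun k => totalFrequency v k ≠ 0).card ≤ q := by
  have hsub : (I.filter fun k => totalFrequency v k ≠ 0) ⊆ Finset.univ.image fun i => (v i).1 := by
    intro k hk
    obtain ⟨i, hi, -⟩ := Finset.exists_ne_zero_of_sum_ne_zero (Finset.mem_filter.1 hk).2
    exact Finset.mem_image.2 ⟨i, Finset.mem_univ _, (Finset.mem_filter.1 hi).2⟩
  simpa using (Finset.card_le_card hsub).trans Finset.card_image_le

lemma abs_totalFrequency_le {v : Fin q → ι × ℤ} {M : ℕ} (hv : ∀ i, |(v i).2| ≤ M) (k : ι) :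
    |totalFrequency v k| ≤ (q * M : ℕ) := by
  have hcard : (Finset.univ.filter fun i => (v i).1 = k).card ≤ q :=
    (Finset.card_filter_le _ _).trans (by simp)
  calc |totalFrequency v k| ≤ ∑ i with (v i).1 = k, |(v i).2| := Finset.abs_sum_le_sum_abs _ _
    _ ≤ (Finset.univ.filter fun i => (v i).1 = k).card • (M : ℤ) :=
        Finset.sum_le_card_nsmul _ _ _ fun i _ => hv i
    _ ≤ (q * M : ℕ) := by
        rw [nsmul_eq_mul]
        exact_mod_cast Nat.mul_le_mul_right M hcard

lemma sum_trigPoly_pow (y : ι → AddCircle T) (I : Finset ι) (J : Finset ℤ) (c : ℤ → ℂ) (q : ℕ) :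
    (∑ k ∈ I, (∑ j ∈ J, c j • fourier j : C(AddCircle T, ℂ)) (y k)) ^ q
      = ∑ v ∈ Fintype.piFinset fun _ : Fin q => I ×ˢ J,
          (∏ i, c (v i).2) * ∏ k ∈ I, fourier (totalFrequency v k) (y k) := by
  simp only [ContinuousMap.coe_sum, Finset.sum_apply, ContinuousMap.smul_apply, smul_eq_mul]
  rw [← Finset.sum_product' I J fun k j => c j * fourier j (y k), Finset.sum_pow']
  refine Finset.sum_congr rfl fun v hv => ?_
  have hmaps : ∀ i ∈ (Finset.univ : Finset (Fin q)), (v i).1 ∈ I := fun i _ =>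
    (Finset.mem_product.1 (Fintype.mem_piFinset.1 hv i)).1
  rw [Finset.prod_mul_distrib]
  congr 1
  rw [← Finset.prod_fiberwise_of_maps_to hmaps]
  refine Finset.prod_congr rfl fun k _ => ?_
  rw [totalFrequency, fourier_sum]
  exact Finset.prod_congr rfl fun i hi => by rw [(Finset.mem_filter.1 hi).2]

omit [DecidableEq ι] in
lemma integrable_prod_fourier {Ω : Type*} {mΩ : MeasurableSpace Ω} (μ : Measure Ω)
    [IsFiniteMeasure μ] {Y : ι → Ω → AddCircle T} (hY : ∀ k, Measurable (Y k)) (I : Finset ι)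
    (b : ι → ℤ) : Integrable (fun w => ∏ k ∈ I, fourier (b k) (Y k w)) μ := by
  refine Integrable.of_bound (C := 1) ?_ (.of_forall fun w => ?_)
  · exact (Finset.measurable_fun_prod _ fun k _ =>
      (map_continuous (fourier (b k))).measurable.comp (hY k)).aestronglyMeasurable
  · rw [norm_prod]
    exact (Finset.prod_eq_one fun k _ => Circle.norm_coe _).le

lemma integral_sum_trigPoly_pow {Ω : Type*} {mΩ : MeasurableSpace Ω} (μ : Measure Ω)
    [IsFiniteMeasure μ] {Y : ι → Ω → AddCircle T} (hY : ∀ k, Measurable (Y k)) (I : Finset ι)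
    (J : Finset ℤ) (c : ℤ → ℂ) (q : ℕ) :
    ∫ w, (∑ k ∈ I, (∑ j ∈ J, c j • fourier j : C(AddCircle T, ℂ)) (Y k w)) ^ q ∂μ
      = ∑ v ∈ Fintype.piFinset fun _ : Fin q => I ×ˢ J,
          (∏ i, c (v i).2) * ∫ w, ∏ k ∈ I, fourier (totalFrequency v k) (Y k w) ∂μ := by
  simp_rw [sum_trigPoly_pow]
  rw [integral_finsetSum _ fun v _ => (integrable_prod_fourier μ hY I _).const_mul _]
  simp_rw [integral_const_mul]

variable [hT : Fact (0 < T)]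

lemma integral_fourier (j : ℤ) :
    ∫ x : AddCircle T, fourier j x ∂haarAddCircle = if j = 0 then 1 else 0 := by
  have h := congr_fun (fourierCoeff_fourier (T := T) j) 0
  simpa [fourierCoeff, Pi.single_apply, eq_comm] using h

omit [DecidableEq ι] in
lemma integral_infinitePi_prod_fourier (I : Finset ι) (b : ι → ℤ) :
    ∫ u, ∏ k ∈ I, fourier (b k) (u k)
        ∂Measure.infinitePi (fun _ : ι => haarAddCircle (T := T))
      = if ∀ k ∈ I, b k = 0 then 1 else 0 := by
  have hcont : Continuous fun y : I → AddCircle T => ∏ k : I, fourier (b k) (y k) :=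
    continuous_finsetProd _ fun k _ => (map_continuous (fourier (b k))).comp (continuous_apply k)
  have h := integral_restrict_infinitePi (fun _ : ι => haarAddCircle (T := T)) (s := I)
    hcont.aestronglyMeasurable
  simp only [integral_fintype_prod_eq_prod (fun (k : I) x => fourier (b k) x), Finset.restrict,
    integral_fourier, Finset.prod_coe_sort I fun k => if b k = 0 then (1 : ℂ) else 0,
    Finset.prod_ite_zero, Finset.prod_const_one] at h
  rw [← h]
  exact integral_congr_ae (.of_forall fun u =>
    (Finset.prod_coe_sort I fun k => fourier (b k) (u k)).symm)

omit [DecidableEq ι] in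
lemma NonResonant.integral_sum_trigPoly_pow_eq {n : ι → ℕ} {I : Finset ι} {L M : ℕ}
    (h : NonResonant n I q L) {J : Finset ℤ} (hJ : ∀ j ∈ J, |j| ≤ M) (hL : q * M ≤ L)
    (c : ℤ → ℂ) :
    ∫ x, (∑ k ∈ I, (∑ j ∈ J, c j • fourier j : C(AddCircle T, ℂ)) (n k • x)) ^ q ∂haarAddCircle
      = ∫ u, (∑ k ∈ I, (∑ j ∈ J, c j • fourier j : C(AddCircle T, ℂ)) (u k)) ^ q
          ∂Measure.infinitePi (fun _ : ι => haarAddCircle (T := T)) := by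
  classical
  rw [integral_sum_trigPoly_pow _ fun k => (continuous_nsmul (n k)).measurable,
    integral_sum_trigPoly_pow _ fun k => measurable_pi_apply k]
  refine Finset.sum_congr rfl fun v hv => ?_
  rw [integral_infinitePi_prod_fourier]
  simp only [fourier_nsmul, ← fourier_sum, integral_fourier]
  have hvJ (i : Fin q) : |(v i).2| ≤ M :=
    hJ _ (Finset.mem_product.1 (Fintype.mem_piFinset.1 hv i)).2
  have hiff : ∑ k ∈ I, totalFrequency v k * n k = 0 ↔ ∀ k ∈ I, totalFrequency v k = 0 := by
    refine ⟨h _ (card_filter_totalFrequency_ne_zero_le v I) fun k _ => ?_, fun h₀ =>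
      Finset.sum_eq_zero fun k hk => by rw [h₀ k hk, zero_mul]⟩
    exact (abs_totalFrequency_le hvJ k).trans (by exact_mod_cast hL)
  simp only [hiff]

end Moments

section CharFun

lemma norm_le_of_iteratedDeriv_eq_zero {E : Type*} [NormedAddCommGroup E] [NormedSpace ℝ E]
    {f : ℝ → E} {m : ℕ} {C x : ℝ} (hf : ContDiff ℝ (m + 1) f)
    (hzero : ∀ k ≤ m, iteratedDeriv k f 0 = 0) (hC : ∀ y, ‖iteratedDeriv (m + 1) f y‖ ≤ C)
    (hx : 0 ≤ x) : ‖f x‖ ≤ C * x ^ (m + 1) / m ! := by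
  have hunique : UniqueDiffOn ℝ (Set.Icc 0 (x + 1)) := uniqueDiffOn_Icc (by linarith)
  have hwithin {k : ℕ} (hk : k ≤ m + 1) {y : ℝ} (hy : y ∈ Set.Icc 0 (x + 1)) :
      iteratedDerivWithin k f (Set.Icc 0 (x + 1)) y = iteratedDeriv k f y :=
    iteratedDerivWithin_eq_iteratedDeriv hunique
      (hf.contDiffAt.of_le (by exact_mod_cast hk)) hy
  have htaylor : taylorWithinEval f m (Set.Icc 0 (x + 1)) 0 x = 0 := by
    rw [taylor_within_apply]
    refine Finset.sum_eq_zero fun k hk => ?_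
    have hkm : k ≤ m := Nat.lt_succ_iff.1 (Finset.mem_range.1 hk)
    rw [hwithin (hkm.trans m.le_succ) ⟨le_rfl, by linarith⟩, hzero k hkm, smul_zero]
  have hbound := taylor_mean_remainder_bound (by linarith) hf.contDiffOn ⟨hx, by linarith⟩
    fun y hy => (hwithin le_rfl hy).symm ▸ hC y
  rwa [htaylor, sub_zero, sub_zero] at hbound

lemma norm_iteratedDeriv_charFun_le {μ : Measure ℝ} [IsFiniteMeasure μ] {m : ℕ}
    (hμ : MemLp id m μ) (t : ℝ) : ‖iteratedDeriv m (charFun μ) t‖ ≤ ∫ x, |x| ^ m ∂μ := by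
  rw [iteratedDeriv_charFun hμ, norm_mul, norm_pow, Complex.norm_I, one_pow, one_mul]
  refine (norm_integral_le_integral_norm _).trans_eq (integral_congr_ae (.of_forall fun x => ?_))
  simp [← Complex.ofReal_mul, Complex.norm_exp_ofReal_mul_I]

lemma norm_charFun_sub_le_of_moments_eq {μ ν : Measure ℝ} [IsFiniteMeasure μ] [IsFiniteMeasure ν]
    {q : ℕ} (hμ : MemLp id (2 * q + 2 : ℕ) μ) (hν : MemLp id (2 * q + 2 : ℕ) ν)
    (hmom : ∀ j ≤ 2 * q + 2, ∫ x, x ^ j ∂μ = ∫ x, x ^ j ∂ν) (t : ℝ) :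
    ‖charFun μ t - charFun ν t‖
      ≤ 2 * (∫ x, x ^ (2 * q + 2) ∂ν) * t ^ (2 * q + 2) / (2 * q + 1)! := by
  have heven : Even (2 * q + 2) := ⟨q + 1, by ring⟩
  wlog ht : 0 ≤ t generalizing t
  · have h := this (-t) (by linarith)
    rwa [charFun_neg, charFun_neg, ← map_sub, RCLike.norm_conj, heven.neg_pow] at h
  have hderiv (k : ℕ) (hk : k ≤ 2 * q + 2) (y : ℝ) :
      iteratedDeriv k (charFun μ - charFun ν) y
        = iteratedDeriv k (charFun μ) y - iteratedDeriv k (charFun ν) y :=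
    iteratedDeriv_sub ((contDiff_charFun hμ).contDiffAt.of_le (by exact_mod_cast hk))
      ((contDiff_charFun hν).contDiffAt.of_le (by exact_mod_cast hk))
  refine norm_le_of_iteratedDeriv_eq_zero (f := charFun μ - charFun ν) (m := 2 * q + 1)
    ((contDiff_charFun hμ).sub (contDiff_charFun hν)) (fun k hk => ?_) (fun y => ?_) ht
  · have hk' : (k : ℝ≥0∞) ≤ (2 * q + 2 : ℕ) := by exact_mod_cast hk.trans (Nat.le_succ _)
    rw [hderiv k (hk.trans (Nat.le_succ _)), iteratedDeriv_charFun_zero (hμ.mono_exponent hk'),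
      iteratedDeriv_charFun_zero (hν.mono_exponent hk'), hmom k (hk.trans (Nat.le_succ _)),
      sub_self]
  · have habs (ρ : Measure ℝ) : ∫ x, |x| ^ (2 * q + 2) ∂ρ = ∫ x, x ^ (2 * q + 2) ∂ρ :=
      integral_congr_ae (.of_forall fun x => heven.pow_abs x)
    rw [hderiv _ le_rfl]
    refine (norm_sub_le _ _).trans ((add_le_add (norm_iteratedDeriv_charFun_le hμ y)
      (norm_iteratedDeriv_charFun_le hν y)).trans_eq ?_)
    rw [habs, habs, hmom _ le_rfl]
    ring

lemma mul_integral_pow_le_of_hasSubgaussianMGF {Ω : Type*} {mΩ : MeasurableSpace Ω} {ν : Measure Ω}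
    {X : Ω → ℝ} {c : ℝ≥0} (hX : HasSubgaussianMGF X c ν) (q : ℕ) (s : ℝ) :
    s ^ (2 * q) * ∫ w, X w ^ (2 * q) ∂ν ≤ 2 * (2 * q)! * exp (c * s ^ 2 / 2) := by
  have hpow (w : Ω) : s ^ (2 * q) * X w ^ (2 * q)
      ≤ (2 * q)! * (exp (s * X w) + exp (-s * X w)) := by
    rw [← mul_pow, ← (even_two_mul q).pow_abs, ← div_le_iff₀' (by positivity)]
    refine (pow_div_factorial_le_exp _ (abs_nonneg _) _).trans ?_
    rw [neg_mul]
    rcases abs_choice (s * X w) with h | h <;> rw [h]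
    · linarith [exp_pos (-(s * X w))]
    · linarith [exp_pos (s * X w)]
  have hinteg (r : ℝ) := hX.integrable_exp_mul r
  calc s ^ (2 * q) * ∫ w, X w ^ (2 * q) ∂ν
      = ∫ w, s ^ (2 * q) * X w ^ (2 * q) ∂ν := (integral_const_mul _ _).symm
    _ ≤ ∫ w, (2 * q)! * (exp (s * X w) + exp (-s * X w)) ∂ν :=
        integral_mono_of_nonneg (.of_forall fun w =>
          mul_nonneg ((even_two_mul q).pow_nonneg s) ((even_two_mul q).pow_nonneg _))
          (((hinteg s).add (hinteg (-s))).const_mul _) (.of_forall hpow)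
    _ = (2 * q)! * (mgf X ν s + mgf X ν (-s)) := by
        rw [integral_const_mul, integral_add (hinteg s) (hinteg (-s)), mgf, mgf]
    _ ≤ (2 * q)! * (exp (c * s ^ 2 / 2) + exp (c * s ^ 2 / 2)) := by
        gcongr
        · exact hX.mgf_le s
        · simpa only [neg_sq] using hX.mgf_le (-s)
    _ = 2 * (2 * q)! * exp (c * s ^ 2 / 2) := by ring

lemma norm_charFun_sub_le_of_hasSubgaussianMGF {μ ν : Measure ℝ} [IsFiniteMeasure μ]
    [IsFiniteMeasure ν] {c : ℝ≥0} (hν : HasSubgaussianMGF id c ν) {q : ℕ}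
    (hμ : MemLp id (2 * q + 2 : ℕ) μ)
    (hmom : ∀ j ≤ 2 * q + 2, ∫ x, x ^ j ∂μ = ∫ x, x ^ j ∂ν) (t : ℝ) :
    ‖charFun μ t - charFun ν t‖
      ≤ 8 * exp (2 * c * t ^ 2) * ((q + 1 : ℕ) * (1 / 4) ^ (q + 1)) := by
  -- Bounding the moment at `2 * t` instead of `t` gains the factor `(1 / 4) ^ (q + 1)`.
  have hmoment := mul_integral_pow_le_of_hasSubgaussianMGF hν (q + 1) (2 * t)
  have hfact : ((2 * (q + 1))! : ℝ) = 2 * (q + 1 : ℕ) * (2 * q + 1)! := by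
    rw [show 2 * (q + 1) = 2 * q + 1 + 1 by ring, Nat.factorial_succ]
    push_cast
    ring
  refine (norm_charFun_sub_le_of_moments_eq hμ (by exact_mod_cast hν.memLp (2 * q + 2 : ℕ))
    hmom t).trans ?_
  rw [div_le_iff₀ (by positivity)]
  calc 2 * (∫ x, x ^ (2 * q + 2) ∂ν) * t ^ (2 * q + 2)
      = 2 * (1 / 4) ^ (q + 1) * ((2 * t) ^ (2 * (q + 1)) * ∫ x, id x ^ (2 * (q + 1)) ∂ν) := by
        rw [mul_pow 2 t, pow_mul 2 2, one_div, inv_pow]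
        norm_num [mul_add]
        field_simp
    _ ≤ 2 * (1 / 4) ^ (q + 1) * (2 * (2 * (q + 1))! * exp (c * (2 * t) ^ 2 / 2)) := by gcongr
    _ = 8 * exp (2 * c * t ^ 2) * ((q + 1 : ℕ) * (1 / 4) ^ (q + 1)) * (2 * q + 1)! := by
        rw [hfact, show (c : ℝ) * (2 * t) ^ 2 / 2 = 2 * c * t ^ 2 by ring]
        ring

lemma tendsto_charFun_sub_of_moments_eq {α : Type*} {l : Filter α} {μ ν : α → Measure ℝ}
    [∀ a, IsFiniteMeasure (μ a)] [∀ a, IsFiniteMeasure (ν a)] {c : ℝ≥0}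
    (hμ : ∀ (a : α) (q : ℕ), MemLp id q (μ a)) (hν : ∀ᶠ a in l, HasSubgaussianMGF id c (ν a))
    (hmom : ∀ q : ℕ, ∀ᶠ a in l, ∫ x, x ^ q ∂μ a = ∫ x, x ^ q ∂ν a) (t : ℝ) :
    Tendsto (fun a => charFun (μ a) t - charFun (ν a) t) l (𝓝 0) := by
  have hgeom : Tendsto (fun q : ℕ => 8 * exp (2 * c * t ^ 2) * ((q + 1 : ℕ) * (1 / 4) ^ (q + 1)))
      atTop (𝓝 0) := by
    have h := (tendsto_self_mul_const_pow_of_lt_one (r := (1 / 4 : ℝ)) (by norm_num)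
      (by norm_num)).comp (tendsto_add_atTop_nat 1)
    simpa only [Function.comp_def, mul_zero] using h.const_mul (8 * exp (2 * c * t ^ 2))
  refine Metric.tendsto_nhds.2 fun ε hε => ?_
  obtain ⟨q, hq⟩ := (hgeom.eventually_lt_const hε).exists
  have hmom' : ∀ᶠ a in l, ∀ j ∈ Finset.range (2 * q + 3), ∫ x, x ^ j ∂μ a = ∫ x, x ^ j ∂ν a :=
    (Finset.range _).eventually_all.2 fun j _ => hmom j
  filter_upwards [hν, hmom'] with a ha hja
  rw [dist_zero_right]
  exact (norm_charFun_sub_le_of_hasSubgaussianMGF ha (hμ a _)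
    (fun j hj => hja j (Finset.mem_range.2 (Nat.lt_succ_of_le hj))) t).trans_lt hq

lemma norm_charFun_map_sub_le {Ω : Type*} {mΩ : MeasurableSpace Ω} {μ : Measure Ω}
    [IsFiniteMeasure μ] {X Y : Ω → ℝ} (hX : AEMeasurable X μ) (hY : AEMeasurable Y μ)
    (hXY : Integrable (X - Y) μ) (t : ℝ) :
    ‖charFun (μ.map X) t - charFun (μ.map Y) t‖ ≤ |t| * ∫ w, |X w - Y w| ∂μ := by
  have hcont : Continuous fun x : ℝ => Complex.exp (t * x * Complex.I) := by fun_prop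
  have hinteg {Z : Ω → ℝ} (hZ : AEMeasurable Z μ) :
      Integrable (fun w => Complex.exp (t * Z w * Complex.I)) μ :=
    .of_bound (hcont.measurable.comp_aemeasurable hZ).aestronglyMeasurable 1
      (.of_forall fun w => by rw [← Complex.ofReal_mul, Complex.norm_exp_ofReal_mul_I])
  have hle (x y : ℝ) : ‖Complex.exp (t * x * Complex.I) - Complex.exp (t * y * Complex.I)‖
      ≤ |t| * |x - y| := by
    have hfactor : Complex.exp (t * x * Complex.I) - Complex.exp (t * y * Complex.I)
        = Complex.exp ((t * y : ℝ) * Complex.I)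
          * (Complex.exp (Complex.I * (t * (x - y) : ℝ)) - 1) := by
      rw [mul_sub, mul_one, ← Complex.exp_add]
      congr 2 <;> push_cast <;> ring
    rw [hfactor, norm_mul, Complex.norm_exp_ofReal_mul_I, one_mul, ← abs_mul]
    exact Real.norm_exp_I_mul_ofReal_sub_one_le
  rw [charFun_apply_real, charFun_apply_real, integral_map hX hcont.aestronglyMeasurable,
    integral_map hY hcont.aestronglyMeasurable, ← integral_sub (hinteg hX) (hinteg hY),
    ← integral_const_mul]
  exact norm_integral_le_of_norm_le (hXY.abs.const_mul _) (.of_forall fun w => hle _ _)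

lemma norm_charFun_map_sub_le_norm {Ω : Type*} {mΩ : MeasurableSpace Ω} {μ : Measure Ω}
    [IsProbabilityMeasure μ] {X Y : Ω → ℝ} (hX : AEMeasurable X μ) (hY : AEMeasurable Y μ)
    {Z : Lp ℂ 2 μ} (hZ : Z =ᵐ[μ] fun w => ((X w - Y w : ℝ) : ℂ)) (t : ℝ) :
    ‖charFun (μ.map X) t - charFun (μ.map Y) t‖ ≤ |t| * ‖Z‖ := by
  have hnorm : (fun w => ‖Z w‖) =ᵐ[μ] fun w => |X w - Y w| := by
    filter_upwards [hZ] with w hw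
    rw [hw, Complex.norm_real, Real.norm_eq_abs]
  have hZ₁ : MemLp Z 1 μ := (Lp.memLp Z).mono_exponent one_le_two
  have hinteg : Integrable (X - Y) μ := by
    refine (integrable_norm_iff (hX.sub hY).aestronglyMeasurable).1 ?_
    exact (memLp_one_iff_integrable.1 hZ₁).norm.congr hnorm
  refine (norm_charFun_map_sub_le hX hY hinteg t).trans ?_
  gcongr
  rw [← integral_congr_ae hnorm, Lp.norm_def,
    ← ENNReal.ofReal_le_iff_le_toReal (Lp.eLpNorm_ne_top Z),
    ofReal_integral_norm_eq_lintegral_enorm (memLp_one_iff_integrable.1 hZ₁),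
    ← eLpNorm_one_eq_lintegral_enorm]
  exact eLpNorm_le_eLpNorm_of_exponent_le one_le_two (Lp.aestronglyMeasurable Z)

end CharFun

lemma tendsto_of_eventually_dist_le {α E : Type*} [PseudoMetricSpace E] {l : Filter α} {u : α → E}
    {v : ℕ → α → E} {ℓ : ℕ → E} {L : E} {ε : ℕ → ℝ} (hv : ∀ M, Tendsto (v M) l (𝓝 (ℓ M)))
    (hℓ : Tendsto ℓ atTop (𝓝 L)) (hε : Tendsto ε atTop (𝓝 0))
    (h : ∀ M, ∀ δ > 0, ∀ᶠ a in l, dist (u a) (v M a) ≤ ε M + δ) : Tendsto u l (𝓝 L) := by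
  refine Metric.tendsto_nhds.2 fun δ hδ => ?_
  obtain ⟨M, hεM, hℓM⟩ := ((hε.eventually_lt_const (by positivity : 0 < δ / 4)).and
    (Metric.tendsto_nhds.1 hℓ (δ / 4) (by positivity))).exists
  filter_upwards [h M (δ / 4) (by positivity),
    Metric.tendsto_nhds.1 (hv M) (δ / 4) (by positivity)] with a hu hva
  linarith [dist_triangle4 (u a) (v M a) (ℓ M) L]

section NormalizedSums

variable {Ω : Type*} {mΩ : MeasurableSpace Ω} {μ : Measure Ω} [IsFiniteMeasure μ]

lemma tendsto_charFun_sub_of_sparse {X : ℕ → Ω → ℝ} {C : ℝ} (hX : ∀ k, Integrable (X k) μ)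
    (hC : ∀ k, ∫ w, |X k w| ∂μ ≤ C) {I : ℕ → Finset ℕ} (hI : ∀ N, I N ⊆ Finset.range N)
    (hsparse : Tendsto (fun N => ((Finset.range N \ I N).card : ℝ) / √N) atTop (𝓝 0)) (t : ℝ) :
    Tendsto (fun N : ℕ => charFun (μ.map fun w => (√N)⁻¹ * ∑ k ∈ Finset.range N, X k w) t
      - charFun (μ.map fun w => (√N)⁻¹ * ∑ k ∈ I N, X k w) t) atTop (𝓝 0) := by
  have hinteg (N : ℕ) (J : Finset ℕ) : Integrable (fun w => (√N)⁻¹ * ∑ k ∈ J, X k w) μ :=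
    (integrable_finsetSum J fun k _ => hX k).const_mul _
  have hdiff (N : ℕ) (w : Ω) : |(√N)⁻¹ * ∑ k ∈ Finset.range N, X k w - (√N)⁻¹ * ∑ k ∈ I N, X k w|
      ≤ (√N)⁻¹ * ∑ k ∈ Finset.range N \ I N, |X k w| := by
    rw [← mul_sub, ← Finset.sum_sdiff_eq_sub (hI N), abs_mul, abs_of_nonneg (by positivity)]
    gcongr
    exact Finset.abs_sum_le_sum_abs _ _
  have hbound (N : ℕ) : |t| * ∫ w, |(√N)⁻¹ * ∑ k ∈ Finset.range N, X k w
        - (√N)⁻¹ * ∑ k ∈ I N, X k w| ∂μ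
      ≤ |t| * C * (((Finset.range N \ I N).card : ℝ) / √N) := by
    rw [mul_assoc]
    gcongr
    calc ∫ w, |(√N)⁻¹ * ∑ k ∈ Finset.range N, X k w - (√N)⁻¹ * ∑ k ∈ I N, X k w| ∂μ
        ≤ ∫ w, (√N)⁻¹ * ∑ k ∈ Finset.range N \ I N, |X k w| ∂μ :=
          integral_mono ((hinteg N _).sub (hinteg N _)).abs
            ((integrable_finsetSum _ fun k _ => (hX k).abs).const_mul _) (hdiff N)
      _ = (√N)⁻¹ * ∑ k ∈ Finset.range N \ I N, ∫ w, |X k w| ∂μ := by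
          rw [integral_const_mul, integral_finsetSum _ fun k _ => (hX k).abs]
      _ ≤ (√N)⁻¹ * ((Finset.range N \ I N).card • C) := by
          gcongr
          exact Finset.sum_le_card_nsmul _ _ _ fun k _ => hC k
      _ = C * (((Finset.range N \ I N).card : ℝ) / √N) := by
          rw [nsmul_eq_mul]
          ring
  refine squeeze_zero_norm (fun N => (norm_charFun_map_sub_le (hinteg N _).aemeasurable
    (hinteg N _).aemeasurable ((hinteg N _).sub (hinteg N _)) t).trans (hbound N)) ?_
  simpa only [mul_zero] using hsparse.const_mul (|t| * C)

end NormalizedSums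

section IndependentModel

variable {S : Type*} {mS : MeasurableSpace S} {P : Measure S} [IsProbabilityMeasure P] {p : S → ℝ}

lemma identDistrib_comp_eval_infinitePi {ι : Type*} (hp : AEMeasurable p P) (k : ι) :
    IdentDistrib (fun u : ι → S => p (u k)) p (Measure.infinitePi fun _ : ι => P) P := by
  have hk := measurePreserving_eval_infinitePi (fun _ : ι => P) k
  have h : IdentDistrib (Function.eval k) id (Measure.infinitePi fun _ : ι => P) P :=
    ⟨hk.aemeasurable, aemeasurable_id, by rw [hk.map_eq, Measure.map_id]⟩
  exact h.comp_of_aemeasurable (by rwa [hk.map_eq])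

lemma hasSubgaussianMGF_of_le {Ω : Type*} {mΩ : MeasurableSpace Ω} {μ : Measure Ω} {X : Ω → ℝ}
    {c c' : ℝ≥0} (h : HasSubgaussianMGF X c μ) (hc : c ≤ c') : HasSubgaussianMGF X c' μ where
  integrable_exp_mul := h.integrable_exp_mul
  mgf_le t := (h.mgf_le t).trans (by gcongr)

lemma hasSubgaussianMGF_mul_sum_infinitePi {ι : Type*} (hp : Measurable p) {K : ℝ≥0}
    (hK : ∀ x, |p x| ≤ K) (hmean : ∫ x, p x ∂P = 0) {I : Finset ι} {r : ℝ}
    (hr : r ^ 2 * I.card ≤ 1) :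
    HasSubgaussianMGF (fun u : ι → S => r * ∑ k ∈ I, p (u k)) (K ^ 2)
      (Measure.infinitePi fun _ : ι => P) := by
  have hident (k : ι) := identDistrib_comp_eval_infinitePi (P := P) hp.aemeasurable k
  have hterm (k : ι) (_ : k ∈ I) : HasSubgaussianMGF (fun u : ι → S => p (u k)) (K ^ 2)
      (Measure.infinitePi fun _ : ι => P) := by
    have h := hasSubgaussianMGF_of_mem_Icc_of_integral_eq_zero (hident k).aemeasurable_fst
      (.of_forall fun u => abs_le.1 (hK (u k))) ((hident k).integral_eq.trans hmean)
    rwa [sub_neg_eq_add, ← two_mul, nnnorm_mul, nnnorm_two, NNReal.nnnorm_eq,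
      mul_div_cancel_left₀ K two_ne_zero] at h
  have hsum := (HasSubgaussianMGF.sum_of_iIndepFun
    (iIndepFun_infinitePi (P := fun _ : ι => P) fun _ => hp) hterm).const_mul r
  refine hasSubgaussianMGF_of_le hsum ?_
  have hr' : (⟨r ^ 2, sq_nonneg r⟩ : ℝ≥0) * I.card ≤ 1 := hr
  rw [Finset.sum_const, nsmul_eq_mul]
  exact (mul_assoc _ _ _).ge.trans (mul_le_of_le_one_left zero_le hr')

lemma tendsto_charFun_sum_infinitePi (hp : Measurable p) (hp₂ : MemLp p 2 P)
    (hmean : ∫ x, p x ∂P = 0) (t : ℝ) :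
    Tendsto (fun N : ℕ => charFun ((Measure.infinitePi fun _ : ℕ => P).map fun u =>
        (√N)⁻¹ * ∑ k ∈ Finset.range N, p (u k)) t) atTop
      (𝓝 (charFun (gaussianReal 0 (∫ x, p x ^ 2 ∂P).toNNReal) t)) := by
  have hident (k : ℕ) := identDistrib_comp_eval_infinitePi (P := P) hp.aemeasurable k
  have hvar : Var[fun u : ℕ → S => p (u 0); Measure.infinitePi fun _ : ℕ => P]
      = ∫ x, p x ^ 2 ∂P := by
    rw [(hident 0).variance_eq, variance_of_integral_eq_zero hp.aemeasurable hmean]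
  have hclt := tendstoInDistribution_inv_sqrt_mul_sum_sub (HasLaw.id (μ := gaussianReal 0 _))
    ((hident 0).memLp_iff.2 hp₂) (iIndepFun_infinitePi (P := fun _ : ℕ => P) fun _ => hp)
    fun k => (hident k).trans (hident 0).symm
  have h := ProbabilityMeasure.tendsto_iff_tendsto_charFun.1 hclt.tendsto t
  simpa only [ProbabilityMeasure.coe_mk, Measure.map_id, (hident 0).integral_eq, hmean, mul_zero,
    sub_zero, hvar] using h

lemma tendsto_charFun_sum_infinitePi_of_sparse (hp : Measurable p) (hp₂ : MemLp p 2 P)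
    (hmean : ∫ x, p x ∂P = 0) {I : ℕ → Finset ℕ} (hI : ∀ N, I N ⊆ Finset.range N)
    (hsparse : Tendsto (fun N => ((Finset.range N \ I N).card : ℝ) / √N) atTop (𝓝 0)) (t : ℝ) :
    Tendsto (fun N : ℕ => charFun ((Measure.infinitePi fun _ : ℕ => P).map fun u =>
        (√N)⁻¹ * ∑ k ∈ I N, p (u k)) t) atTop
      (𝓝 (charFun (gaussianReal 0 (∫ x, p x ^ 2 ∂P).toNNReal) t)) := by
  have hident (k : ℕ) := identDistrib_comp_eval_infinitePi (P := P) hp.aemeasurable k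
  have hdiff := tendsto_charFun_sub_of_sparse
    (fun k => (hident k).integrable_iff.2 (hp₂.integrable one_le_two))
    (fun k => ((hident k).comp measurable_abs).integral_eq.le) hI hsparse t
  simpa only [sub_sub_cancel, sub_zero] using
    (tendsto_charFun_sum_infinitePi hp hp₂ hmean t).sub hdiff

end IndependentModel

section ConditionA

variable {ω : ℕ → ℝ} {n : ℕ → ℕ}

lemma card_le_of_forall_amongSmallest (hn : Function.Injective n) {D : ℕ} {I : Finset ℕ}
    (hI : ∀ k ∈ I, AmongSmallest n D k) : I.card ≤ D := by
  obtain rfl | hne := I.eq_empty_or_nonempty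
  · exact Nat.zero_le _
  obtain ⟨k, hk, hmax⟩ := I.exists_max_image n hne
  have hfin : {j : ℕ | n j ≤ n k}.Finite := (Set.finite_Iic (n k)).preimage hn.injOn
  rw [← Set.ncard_coe_finset]
  exact (Set.ncard_le_ncard (t := {j | n j ≤ n k}) hmax hfin).trans (hI k hk)

lemma CondAWith.amongSmallest {N₀ D : ℕ} (hA : CondAWith ω n N₀) (hD : N₀ ≤ D) {I : Finset ℕ}
    {b : ℕ → ℤ} (hI : 2 ≤ I.card) (hIω : I.card ≤ ω D) (hb₀ : ∀ k ∈ I, b k ≠ 0)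
    (hb : ∀ k ∈ I, (|b k| : ℝ) ≤ (D : ℝ) ^ ω D) (hsum : ∑ k ∈ I, b k * n k = 0) {k : ℕ}
    (hk : k ∈ I) : AmongSmallest n D k := by
  have h := hA D hD I.card (fun i => I.equivFin.symm i) (fun i => b (I.equivFin.symm i)) hI hIω
    (Subtype.val_injective.comp I.equivFin.symm.injective) (fun i => hb₀ _ (I.equivFin.symm i).2)
    (fun i => hb _ (I.equivFin.symm i).2)
    (by rw [I.equivFin.symm.sum_comp fun k : I => b k * (n k : ℤ),
      I.sum_coe_sort fun k => b k * (n k : ℤ), hsum])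
    (I.equivFin ⟨k, hk⟩)
  rwa [I.equivFin.symm_apply_apply] at h

lemma CondAWith.nonResonant [∀ k, NeZero (n k)] {N₀ D R L : ℕ} (hA : CondAWith ω n N₀)
    (hD : N₀ ≤ D) (hR : R ≤ ω D) (hL : L ≤ (D : ℝ) ^ ω D) {I : Finset ℕ}
    (hI : ∀ k ∈ I, ¬ AmongSmallest n D k) : NonResonant n I R L := by
  intro b hcard hb hsum k hk
  by_contra hbk
  set J := I.filter fun k => b k ≠ 0 with hJ
  have hkJ : k ∈ J := Finset.mem_filter.2 ⟨hk, hbk⟩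
  have hsumJ : ∑ k ∈ J, b k * n k = 0 := by
    rw [hJ, Finset.sum_filter_of_ne fun k _ h => left_ne_zero_of_mul h, hsum]
  have htwo : 2 ≤ J.card := by
    by_contra! hlt
    obtain ⟨l, hl⟩ := Finset.card_eq_one.1
      (le_antisymm (Nat.lt_succ_iff.1 hlt) (Finset.card_pos.2 ⟨k, hkJ⟩))
    rw [hl, Finset.mem_singleton] at hkJ
    rw [hl, Finset.sum_singleton, ← hkJ] at hsumJ
    exact mul_ne_zero hbk (Nat.cast_ne_zero.2 (NeZero.ne (n k))) hsumJ
  refine hI k hk (hA.amongSmallest hD htwo ((Nat.cast_le.2 hcard).trans hR)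
    (fun l hl => (Finset.mem_filter.1 hl).2) (fun l hl => ?_) hsumJ hkJ)
  exact (by exact_mod_cast hb l (Finset.mem_filter.1 hl).1 : (|b l| : ℝ) ≤ L).trans hL

/-- The number `⌊N ^ (1/4)⌋` of smallest elements of `n` that are discarded from `n 0, …, n (N-1)`:
negligible against `√N`, yet `N` is polynomially bounded in it. -/
def discardCount (N : ℕ) : ℕ := N.sqrt.sqrt

lemma tendsto_discardCount : Tendsto discardCount atTop atTop := by
  have hsqrt : Tendsto Nat.sqrt atTop atTop :=
    tendsto_atTop_atTop.2 fun b => ⟨b * b, fun _ => Nat.le_sqrt.2⟩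
  exact hsqrt.comp hsqrt

lemma discardCount_sq_le (N : ℕ) : (discardCount N : ℝ) ^ 2 ≤ √N := by
  refine le_sqrt_of_sq_le ?_
  exact_mod_cast (Nat.pow_le_pow_left (Nat.sqrt_le' N.sqrt) 2).trans (Nat.sqrt_le' N)

lemma le_discardCount_pow {N : ℕ} (h : 2 ≤ discardCount N) : N ≤ discardCount N ^ 8 :=
  calc N ≤ (N.sqrt + 1) ^ 2 := (Nat.lt_succ_sqrt' N).le
    _ ≤ ((discardCount N + 1) ^ 2) ^ 2 := by gcongr; exact Nat.lt_succ_sqrt' N.sqrt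
    _ ≤ ((discardCount N ^ 2) ^ 2) ^ 2 := by gcongr; nlinarith
    _ = discardCount N ^ 8 := by ring

lemma tendsto_discardCount_div_sqrt :
    Tendsto (fun N : ℕ => (discardCount N : ℝ) / √N) atTop (𝓝 0) := by
  refine squeeze_zero (fun N => by positivity) (fun N => ?_)
    (tendsto_inv_atTop_zero.comp (tendsto_natCast_atTop_atTop.comp tendsto_discardCount))
  rcases Nat.eq_zero_or_pos (discardCount N) with h₀ | h₀
  · simp [h₀]
  · have hpos : (0 : ℝ) < discardCount N := Nat.cast_pos.2 h₀
    have hsq := discardCount_sq_le N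
    rw [Function.comp_apply, Function.comp_apply, inv_eq_one_div,
      div_le_div_iff₀ ((pow_pos hpos 2).trans_le hsq) hpos, one_mul, ← sq]
    exact hsq

open Classical in
/-- The indices `k < N` for which `n k` is not among the `discardCount N` smallest elements
of `n`. -/
def goodIndices (n : ℕ → ℕ) (N : ℕ) : Finset ℕ :=
  (Finset.range N).filter fun k => ¬ AmongSmallest n (discardCount N) k

lemma mem_goodIndices {N k : ℕ} :
    k ∈ goodIndices n N ↔ k < N ∧ ¬ AmongSmallest n (discardCount N) k := by
  simp only [goodIndices, Finset.mem_filter, Finset.mem_range]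

lemma goodIndices_subset (n : ℕ → ℕ) (N : ℕ) : goodIndices n N ⊆ Finset.range N := fun _ hk =>
  Finset.mem_range.2 (mem_goodIndices.1 hk).1

lemma tendsto_card_sdiff_goodIndices_div_sqrt (hn : Function.Injective n) :
    Tendsto (fun N => ((Finset.range N \ goodIndices n N).card : ℝ) / √N) atTop (𝓝 0) := by
  refine squeeze_zero (fun N => by positivity) (fun N => ?_) tendsto_discardCount_div_sqrt
  gcongr
  refine card_le_of_forall_amongSmallest hn fun k hk => ?_
  rw [Finset.mem_sdiff, Finset.mem_range, mem_goodIndices] at hk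
  exact not_not.1 fun h => hk.2 ⟨hk.1, h⟩

lemma CondA.eventually_nonResonant [∀ k, NeZero (n k)] (hA : CondA ω n)
    (hω : Tendsto ω atTop atTop) (R κ : ℕ) :
    ∀ᶠ N in atTop, NonResonant n (goodIndices n N) R (N ^ κ) := by
  obtain ⟨N₀, hA⟩ := hA
  filter_upwards [tendsto_discardCount.eventually_ge_atTop N₀,
    tendsto_discardCount.eventually_ge_atTop 2,
    (hω.comp tendsto_discardCount).eventually_ge_atTop (R : ℝ),
    (hω.comp tendsto_discardCount).eventually_ge_atTop (8 * κ : ℕ)] with N hN₀ htwo hR hκ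
  refine hA.nonResonant hN₀ hR ?_ fun k hk => (mem_goodIndices.1 hk).2
  calc ((N ^ κ : ℕ) : ℝ) ≤ ((discardCount N ^ 8) ^ κ : ℕ) := by
        gcongr
        exact le_discardCount_pow htwo
    _ = (discardCount N : ℝ) ^ ((8 * κ : ℕ) : ℝ) := by
        rw [rpow_natCast, ← pow_mul, Nat.cast_pow]
    _ ≤ (discardCount N : ℝ) ^ ω (discardCount N) := by
        gcongr
        · exact_mod_cast one_le_two.trans htwo
        · exact hκ

end ConditionA

section TrigonometricPolynomials

variable {T : ℝ} [hT : Fact (0 < T)] {p : AddCircle T → ℝ} {J : Finset ℤ} {c : ℤ → ℂ}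

lemma NonResonant.integral_mul_sum_pow_eq {ι : Type*} {n : ι → ℕ} {I : Finset ι}
    {q L M : ℕ} (h : NonResonant n I q L) (hJ : ∀ j ∈ J, |j| ≤ M) (hL : q * M ≤ L)
    (hp : ∀ x, (p x : ℂ) = (∑ j ∈ J, c j • fourier j : C(AddCircle T, ℂ)) x) (r : ℝ) :
    ∫ x, (r * ∑ k ∈ I, p (n k • x)) ^ q ∂haarAddCircle
      = ∫ u, (r * ∑ k ∈ I, p (u k)) ^ q
          ∂Measure.infinitePi fun _ : ι => haarAddCircle (T := T) := by
  have h := h.integral_sum_trigPoly_pow_eq (T := T) hJ hL c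
  simp only [← hp, ← Complex.ofReal_sum, ← Complex.ofReal_pow, integral_complex_ofReal] at h
  simp only [mul_pow, integral_const_mul, Complex.ofReal_injective h]

variable {n : ℕ → ℕ} {I : ℕ → Finset ℕ}

lemma tendsto_charFun_sum_trigPoly
    (hp : ∀ x, (p x : ℂ) = (∑ j ∈ J, c j • fourier j : C(AddCircle T, ℂ)) x)
    (hmean : ∫ x, p x ∂haarAddCircle = 0) (hI : ∀ N, I N ⊆ Finset.range N)
    (hsparse : Tendsto (fun N => ((Finset.range N \ I N).card : ℝ) / √N) atTop (𝓝 0))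
    (hres : ∀ R L, ∀ᶠ N in atTop, NonResonant n (I N) R L) (t : ℝ) :
    Tendsto (fun N : ℕ => charFun
        (haarAddCircle.map fun x : AddCircle T => (√N)⁻¹ * ∑ k ∈ I N, p (n k • x)) t) atTop
      (𝓝 (charFun (gaussianReal 0 (∫ x, p x ^ 2 ∂haarAddCircle).toNNReal) t)) := by
  have hcont : Continuous p := Complex.isometry_ofReal.comp_continuous_iff.1
    ((map_continuous (∑ j ∈ J, c j • fourier j)).congr fun x => (hp x).symm)
  obtain ⟨K, hK⟩ := (isCompact_range (continuous_nnnorm.comp hcont)).bddAbove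
  have hbound (x : AddCircle T) : |p x| ≤ K := NNReal.coe_le_coe.2 (hK ⟨x, rfl⟩)
  have hX (N : ℕ) : Continuous fun x : AddCircle T => (√N)⁻¹ * ∑ k ∈ I N, p (n k • x) := by
    fun_prop
  have hY (N : ℕ) : Measurable fun u : ℕ → AddCircle T => (√N)⁻¹ * ∑ k ∈ I N, p (u k) := by
    have := hcont.measurable
    fun_prop
  have hcard (N : ℕ) : (√N)⁻¹ ^ 2 * (I N).card ≤ 1 := by
    rw [inv_pow, sq_sqrt N.cast_nonneg]
    refine inv_mul_le_one_of_le₀ ?_ N.cast_nonneg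
    exact_mod_cast (Finset.card_le_card (hI N)).trans_eq (Finset.card_range N)
  have hdiff := tendsto_charFun_sub_of_moments_eq (l := atTop) (c := K ^ 2)
    (μ := fun N : ℕ => haarAddCircle.map fun x : AddCircle T => (√N)⁻¹ * ∑ k ∈ I N, p (n k • x))
    (ν := fun N : ℕ => (Measure.infinitePi fun _ : ℕ => haarAddCircle).map fun u =>
      (√N)⁻¹ * ∑ k ∈ I N, p (u k))
    (fun N q => (memLp_map_measure_iff aestronglyMeasurable_id (hX N).aemeasurable).2
      ((hX N).memLp_of_hasCompactSupport (.of_compactSpace _)))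
    (.of_forall fun N => (HasSubgaussianMGF.id_map_iff (hY N).aemeasurable).2
      (hasSubgaussianMGF_mul_sum_infinitePi hcont.measurable hbound hmean (hcard N)))
    (fun q => ?_) t
  · have hlim := tendsto_charFun_sum_infinitePi_of_sparse hcont.measurable
      (hcont.memLp_of_hasCompactSupport (.of_compactSpace _)) hmean hI hsparse t
    simpa only [sub_add_cancel, zero_add] using hdiff.add hlim
  · have hJ (j : ℤ) (hj : j ∈ J) : |j| ≤ (J.sup Int.natAbs : ℕ) := by
      rw [Int.abs_eq_natAbs]
      exact_mod_cast Finset.le_sup (f := Int.natAbs) hj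
    filter_upwards [hres q (q * J.sup Int.natAbs)] with N hN
    rw [integral_map (hX N).aemeasurable (by fun_prop),
      integral_map (hY N).aemeasurable (by fun_prop)]
    exact hN.integral_mul_sum_pow_eq hJ le_rfl hp _

end TrigonometricPolynomials

section RealFourierSeries

variable {T : ℝ} [hT : Fact (0 < T)]

lemma fourierCoeff_neg_ofReal (F : AddCircle T → ℝ) (j : ℤ) :
    fourierCoeff (fun x => (F x : ℂ)) (-j)
      = starRingEnd ℂ (fourierCoeff (fun x => (F x : ℂ)) j) := by
  simp only [fourierCoeff, smul_eq_mul, ← integral_conj, map_mul, Complex.conj_ofReal, fourier_neg,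
    Complex.conj_conj]

lemma ofReal_re_fourierPartialSum (F : AddCircle T → ℝ) (M : ℕ) (x : AddCircle T) :
    ((fourierPartialSum (fun x => (F x : ℂ)) M x).re : ℂ)
      = fourierPartialSum (fun x => (F x : ℂ)) M x := by
  refine Complex.conj_eq_iff_re.1 ?_
  have hmem (j : ℤ) (hj : j ∈ Finset.Icc (-M : ℤ) M) : -j ∈ Finset.Icc (-M : ℤ) M := by
    rw [Finset.mem_Icc] at hj ⊢
    omega
  simp only [fourierPartialSum, ContinuousMap.coe_sum, Finset.sum_apply, ContinuousMap.coe_smul,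
    Pi.smul_apply, smul_eq_mul, map_sum, map_mul, ← fourierCoeff_neg_ofReal, ← fourier_neg]
  exact Finset.sum_nbij' Neg.neg Neg.neg hmem hmem (fun j _ => neg_neg j) (fun j _ => neg_neg j)
    fun _ _ => rfl

lemma integral_fourierPartialSum (F : AddCircle T → ℂ) (M : ℕ) :
    ∫ x, fourierPartialSum F M x ∂haarAddCircle = ∫ x, F x ∂haarAddCircle := by
  have hinteg (j : ℤ) : Integrable (fun x : AddCircle T => fourierCoeff F j * fourier j x)
      haarAddCircle := by
    exact (by fun_prop : Continuous _).integrable_of_hasCompactSupport (.of_compactSpace _)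
  simp only [fourierPartialSum, ContinuousMap.coe_sum, Finset.sum_apply, ContinuousMap.coe_smul,
    Pi.smul_apply, smul_eq_mul]
  rw [integral_finsetSum _ fun j _ => hinteg j]
  simp only [integral_const_mul, integral_fourier, mul_ite, mul_one, mul_zero, Finset.sum_ite_eq',
    Finset.mem_Icc, Left.neg_nonpos_iff, Nat.cast_nonneg, and_self, if_true]
  simp only [fourierCoeff, neg_zero, fourier_zero, one_smul]

lemma norm_sq_eq_integral_sq {Ω : Type*} {mΩ : MeasurableSpace Ω} {μ : Measure Ω} {Z : Lp ℂ 2 μ}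
    {X : Ω → ℝ} (h : Z =ᵐ[μ] fun w => (X w : ℂ)) : ‖Z‖ ^ 2 = ∫ w, X w ^ 2 ∂μ := by
  refine Complex.ofReal_injective ?_
  rw [← integral_complex_ofReal, Complex.ofReal_pow, ← Complex.coe_algebraMap,
    ← inner_self_eq_norm_sq_to_K (𝕜 := ℂ) Z, L2.inner_def]
  refine integral_congr_ae ?_
  filter_upwards [h] with w hw
  rw [hw, RCLike.inner_apply, Complex.conj_ofReal, sq]
  exact (Complex.ofReal_mul _ _).symm

lemma tendsto_fourierPartialSumLp (F : Lp ℂ 2 (haarAddCircle (T := T))) :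
    Tendsto (fourierPartialSumLp F) atTop (𝓝 F) := by
  have h := hasSum_fourier_series_L2 F
  rw [HasSum, SummationFilter.unconditional_filter] at h
  exact h.comp Finset.tendsto_Icc_neg

lemma tendsto_sqrt_mul_norm_sub_fourierPartialSumLp {F : Lp ℂ 2 (haarAddCircle (T := T))} {s : ℝ}
    (hs : 0 ≤ s)
    (hF : Summable fun j : ℤ => |(j : ℝ)| ^ (2 * s) * ‖fourierCoeff F j‖ ^ 2) {κ : ℕ}
    (hκ : 1 ≤ κ * s) :
    Tendsto (fun N : ℕ => √N * ‖F - fourierPartialSumLp F (N ^ κ)‖) atTop (𝓝 0) := by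
  set C := ∑' j : ℤ, |(j : ℝ)| ^ (2 * s) * ‖fourierCoeff F j‖ ^ 2
  have : 0 ≤ C := tsum_nonneg fun j => by positivity
  have hle (N : ℕ) : √N * ‖F - fourierPartialSumLp F (N ^ κ)‖ ≤ √(C / N) := by
    obtain rfl | hN := N.eq_zero_or_pos
    · simp
    have hN1 : (1 : ℝ) ≤ N := Nat.one_le_cast.2 hN
    have hpow : (N : ℝ) ^ 2 ≤ ((N ^ κ : ℕ) + 1 : ℝ) ^ (2 * s) :=
      calc (N : ℝ) ^ 2 = (N : ℝ) ^ (2 : ℝ) := (rpow_ofNat _ _).symm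
        _ ≤ (N : ℝ) ^ (κ * (2 * s)) := rpow_le_rpow_of_exponent_le hN1 (by linarith)
        _ = ((N : ℝ) ^ κ) ^ (2 * s) := by rw [rpow_mul (by positivity), rpow_natCast]
        _ ≤ ((N ^ κ : ℕ) + 1 : ℝ) ^ (2 * s) := by
          push_cast
          gcongr
          linarith
    refine le_sqrt_of_sq_le ?_
    rw [mul_pow, sq_sqrt N.cast_nonneg]
    calc N * ‖F - fourierPartialSumLp F (N ^ κ)‖ ^ 2
        ≤ N * (C / ((N ^ κ : ℕ) + 1 : ℝ) ^ (2 * s)) := by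
          gcongr
          exact norm_sub_fourierPartialSumLp_sq_le hs hF _
      _ ≤ N * (C / (N : ℝ) ^ 2) := by gcongr
      _ = C / N := by field_simp
  refine squeeze_zero (fun N => by positivity) hle ?_
  simpa only [sqrt_zero] using (tendsto_const_div_atTop_nhds_zero_nat C).sqrt

end RealFourierSeries

section CircleCLT

variable {T : ℝ} [hT : Fact (0 < T)]

lemma continuous_charFun_gaussianReal (t : ℝ) :
    Continuous fun v : ℝ => charFun (gaussianReal 0 v.toNNReal) t := by
  simp only [charFun_gaussianReal]
  fun_prop

lemma aemeasurable_mul_sum_dilates {ι : Type*} {n : ι → ℕ} [∀ k, NeZero (n k)]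
    {F : AddCircle T → ℝ} (hF : AEMeasurable F haarAddCircle) (I : Finset ι) (r : ℝ) :
    AEMeasurable (fun x => r * ∑ k ∈ I, F (n k • x)) haarAddCircle :=
  (Finset.aemeasurable_fun_sum I fun k _ => hF.comp_quasiMeasurePreserving
    (measurePreserving_nsmul_haarAddCircle (n k)).quasiMeasurePreserving).const_mul r

lemma norm_charFun_sum_dilates_sub_le {ι : Type*} {n : ι → ℕ} [∀ k, NeZero (n k)]
    {F G : AddCircle T → ℝ} (hF : AEMeasurable F haarAddCircle) (hG : AEMeasurable G haarAddCircle)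
    {Z : Lp ℂ 2 (haarAddCircle (T := T))} (hZ : Z =ᵐ[haarAddCircle] fun x => (F x - G x : ℝ))
    (I : Finset ι) (r t : ℝ) :
    ‖charFun (haarAddCircle.map fun x => r * ∑ k ∈ I, F (n k • x)) t
        - charFun (haarAddCircle.map fun x => r * ∑ k ∈ I, G (n k • x)) t‖
      ≤ |t| * (|r| * ‖∑ k ∈ I, dilation (n k) Z‖) := by
  have hdil (k : ι) : dilation (n k) Z =ᵐ[haarAddCircle]
      fun x => (F (n k • x) - G (n k • x) : ℝ) := by
    filter_upwards [coeFn_dilation (n k) Z,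
      (measurePreserving_nsmul_haarAddCircle (n k)).quasiMeasurePreserving.ae_eq_comp hZ]
      with x hx hZx
    rw [hx]
    exact hZx
  have hsum : ((r : ℂ) • ∑ k ∈ I, dilation (n k) Z : Lp ℂ 2 (haarAddCircle (T := T)))
      =ᵐ[haarAddCircle] fun x =>
        (r * ∑ k ∈ I, F (n k • x) - r * ∑ k ∈ I, G (n k • x) : ℝ) := by
    filter_upwards [Lp.coeFn_smul (r : ℂ) (∑ k ∈ I, dilation (n k) Z),
      Lp.coeFn_finsetSum I fun k => dilation (n k) Z,
      (Finset.eventually_all I).2 fun k _ => hdil k] with x hsmul hsum hdil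
    rw [hsmul, Pi.smul_apply, hsum, Finset.sum_apply, Finset.sum_congr rfl hdil, smul_eq_mul,
      ← mul_sub, ← Finset.sum_sub_distrib]
    push_cast
    rfl
  refine (norm_charFun_map_sub_le_norm (aemeasurable_mul_sum_dilates hF I r)
    (aemeasurable_mul_sum_dilates hG I r) hsum t).trans_eq ?_
  rw [norm_smul, Complex.norm_real, Real.norm_eq_abs]

lemma NonResonant.inv_sqrt_mul_norm_sum_dilation_sub_le {ι : Type*} {n : ι → ℕ}
    [∀ k, NeZero (n k)] {I : Finset ι} {L M N : ℕ} (h : NonResonant n I 2 L)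
    (F : Lp ℂ 2 (haarAddCircle (T := T))) (hM : M ≤ L) (hN : I.card ≤ N) :
    (√N)⁻¹ * ‖∑ k ∈ I, dilation (n k) (F - fourierPartialSumLp F M)‖
      ≤ ‖F - fourierPartialSumLp F M‖ + 2 * (√N * ‖F - fourierPartialSumLp F L‖) := by
  obtain rfl | hN₀ := N.eq_zero_or_pos
  · simp
  rw [inv_mul_le_iff₀ (by positivity)]
  calc ‖∑ k ∈ I, dilation (n k) (F - fourierPartialSumLp F M)‖
      ≤ √I.card * ‖F - fourierPartialSumLp F M‖ + 2 * I.card * ‖F - fourierPartialSumLp F L‖ :=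
        h.norm_sum_dilation_sub_le F hM
    _ ≤ √N * ‖F - fourierPartialSumLp F M‖ + 2 * N * ‖F - fourierPartialSumLp F L‖ := by gcongr
    _ = √N * (‖F - fourierPartialSumLp F M‖ + 2 * (√N * ‖F - fourierPartialSumLp F L‖)) := by
        linear_combination (-2 * ‖F - fourierPartialSumLp F L‖) * sq_sqrt (N.cast_nonneg (α := ℝ))

lemma fourierPartialSumLp_eq_ofReal {F : AddCircle T → ℝ} {Z : Lp ℂ 2 (haarAddCircle (T := T))}
    (hZ : Z =ᵐ[haarAddCircle] fun x => (F x : ℂ)) (M : ℕ) :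
    fourierPartialSumLp Z M =ᵐ[haarAddCircle]
      fun x => ((fourierPartialSum (fun x => (F x : ℂ)) M x).re : ℂ) := by
  have hcongr : fourierPartialSum (fun x => (F x : ℂ)) M = fourierPartialSum Z M := by
    simp only [fourierPartialSum, fourierCoeff_congr_ae hZ]
  rw [funext (ofReal_re_fourierPartialSum F M), hcongr]
  exact coeFn_fourierPartialSumLp Z M

lemma sub_fourierPartialSumLp_eq_ofReal {F : AddCircle T → ℝ}
    {Z : Lp ℂ 2 (haarAddCircle (T := T))} (hZ : Z =ᵐ[haarAddCircle] fun x => (F x : ℂ)) (M : ℕ) :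
    (Z - fourierPartialSumLp Z M : Lp ℂ 2 (haarAddCircle (T := T))) =ᵐ[haarAddCircle]
      fun x => (F x - (fourierPartialSum (fun x => (F x : ℂ)) M x).re : ℝ) := by
  filter_upwards [Lp.coeFn_sub Z (fourierPartialSumLp Z M), hZ,
    fourierPartialSumLp_eq_ofReal hZ M] with x hsub hx hpx
  rw [hsub, Pi.sub_apply, hx, hpx, Complex.ofReal_sub]

lemma integral_re_fourierPartialSum (F : AddCircle T → ℝ) (M : ℕ) :
    ∫ x, (fourierPartialSum (fun x => (F x : ℂ)) M x).re ∂haarAddCircle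
      = ∫ x, F x ∂haarAddCircle := Complex.ofReal_injective <| by
  simp only [← integral_complex_ofReal, ofReal_re_fourierPartialSum, integral_fourierPartialSum]

variable {n : ℕ → ℕ} [∀ k, NeZero (n k)] {I : ℕ → Finset ℕ} {s : ℝ}

lemma eventually_inv_sqrt_mul_norm_sum_dilation_sub_le {Z : Lp ℂ 2 (haarAddCircle (T := T))}
    (hs : 0 < s) (hZ : Summable fun j : ℤ => |(j : ℝ)| ^ (2 * s) * ‖fourierCoeff Z j‖ ^ 2)
    (hI : ∀ N, I N ⊆ Finset.range N) (hres : ∀ κ, ∀ᶠ N in atTop, NonResonant n (I N) 2 (N ^ κ))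
    (M : ℕ) {δ : ℝ} (hδ : 0 < δ) :
    ∀ᶠ N : ℕ in atTop, (√N)⁻¹ * ‖∑ k ∈ I N, dilation (n k) (Z - fourierPartialSumLp Z M)‖
      ≤ ‖Z - fourierPartialSumLp Z M‖ + δ := by
  obtain ⟨κ, hκ⟩ := exists_nat_ge (1 / s)
  rw [div_le_iff₀ hs] at hκ
  have hκ₀ : κ ≠ 0 := by
    rintro rfl
    norm_num at hκ
  have htail := (tendsto_sqrt_mul_norm_sub_fourierPartialSumLp hs.le hZ hκ).const_mul 2
  rw [mul_zero] at htail
  filter_upwards [hres κ, eventually_ge_atTop M, htail.eventually_le_const hδ]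
    with N hN hMN hle
  exact (hN.inv_sqrt_mul_norm_sum_dilation_sub_le Z (hMN.trans (Nat.le_self_pow hκ₀ N))
    (by simpa using Finset.card_le_card (hI N))).trans (by gcongr)

variable {F : AddCircle T → ℝ}

lemma tendsto_charFun_sum_dilates_of_nonResonant (hF : MemLp F 2 haarAddCircle)
    (hmean : ∫ x, F x ∂haarAddCircle = 0) (hs : 0 < s)
    (hFs : Summable fun j : ℤ =>
      |(j : ℝ)| ^ (2 * s) * ‖fourierCoeff (fun x => (F x : ℂ)) j‖ ^ 2)
    (hI : ∀ N, I N ⊆ Finset.range N)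
    (hsparse : Tendsto (fun N => ((Finset.range N \ I N).card : ℝ) / √N) atTop (𝓝 0))
    (hres : ∀ R κ, ∀ᶠ N in atTop, NonResonant n (I N) R (N ^ κ)) (t : ℝ) :
    Tendsto (fun N : ℕ => charFun
        (haarAddCircle.map fun x : AddCircle T => (√N)⁻¹ * ∑ k ∈ I N, F (n k • x)) t) atTop
      (𝓝 (charFun (gaussianReal 0 (∫ x, F x ^ 2 ∂haarAddCircle).toNNReal) t)) := by
  set Z := hF.ofReal.toLp (fun x => (F x : ℂ))
  have hZ : Z =ᵐ[haarAddCircle] fun x => (F x : ℂ) := hF.ofReal.coeFn_toLp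
  have hpartial := tendsto_fourierPartialSumLp Z
  have hresL (R L : ℕ) : ∀ᶠ N in atTop, NonResonant n (I N) R L := by
    filter_upwards [hres R 1, eventually_ge_atTop L] with N hN hL
    exact hN.mono le_rfl (hL.trans_eq (pow_one N).symm)
  refine tendsto_of_eventually_dist_le (ε := fun M => |t| * ‖Z - fourierPartialSumLp Z M‖)
    (fun M => tendsto_charFun_sum_trigPoly (ofReal_re_fourierPartialSum F M)
      ((integral_re_fourierPartialSum F M).trans hmean) hI hsparse hresL t) ?_ ?_ ?_
  · simp only [← norm_sq_eq_integral_sq hZ,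
      ← norm_sq_eq_integral_sq (fourierPartialSumLp_eq_ofReal hZ _)]
    exact ((continuous_charFun_gaussianReal t).tendsto _).comp (hpartial.norm.pow 2)
  · simpa using (hpartial.const_sub Z).norm.const_mul |t|
  · intro M δ hδ
    have hδt : 0 < δ / (|t| + 1) := by positivity
    have hZs : Summable fun j : ℤ => |(j : ℝ)| ^ (2 * s) * ‖fourierCoeff Z j‖ ^ 2 := by
      rwa [fourierCoeff_congr_ae hZ]
    filter_upwards [eventually_inv_sqrt_mul_norm_sum_dilation_sub_le hs hZs hI (hres 2) M hδt]
      with N hN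
    rw [dist_eq_norm]
    calc _ ≤ |t| * (|(√N)⁻¹| * ‖∑ k ∈ I N, dilation (n k) (Z - fourierPartialSumLp Z M)‖) :=
          norm_charFun_sum_dilates_sub_le hF.aemeasurable (by fun_prop)
            (sub_fourierPartialSumLp_eq_ofReal hZ M) (I N) _ t
      _ ≤ |t| * (‖Z - fourierPartialSumLp Z M‖ + δ / (|t| + 1)) := by
          rw [abs_of_nonneg (inv_nonneg.2 (sqrt_nonneg _))]
          gcongr
      _ ≤ |t| * ‖Z - fourierPartialSumLp Z M‖ + δ := by
          rw [mul_add, ← mul_div_assoc]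
          gcongr
          rw [div_le_iff₀ (by positivity)]
          nlinarith

theorem tendsto_charFun_sum_dilates (hF : MemLp F 2 haarAddCircle)
    (hmean : ∫ x, F x ∂haarAddCircle = 0) (hs : 0 < s)
    (hFs : Summable fun j : ℤ =>
      |(j : ℝ)| ^ (2 * s) * ‖fourierCoeff (fun x => (F x : ℂ)) j‖ ^ 2)
    (hI : ∀ N, I N ⊆ Finset.range N)
    (hsparse : Tendsto (fun N => ((Finset.range N \ I N).card : ℝ) / √N) atTop (𝓝 0))
    (hres : ∀ R κ, ∀ᶠ N in atTop, NonResonant n (I N) R (N ^ κ)) (t : ℝ) :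
    Tendsto (fun N : ℕ => charFun
        (haarAddCircle.map fun x : AddCircle T => (√N)⁻¹ * ∑ k ∈ Finset.range N, F (n k • x)) t)
      atTop (𝓝 (charFun (gaussianReal 0 (∫ x, F x ^ 2 ∂haarAddCircle).toNNReal) t)) := by
  have hmp (k : ℕ) := measurePreserving_nsmul_haarAddCircle (T := T) (n k)
  have hnorm (k : ℕ) : ∫ x : AddCircle T, |F (n k • x)| ∂haarAddCircle
      ≤ ∫ x, |F x| ∂haarAddCircle := by
    have hFk : AEStronglyMeasurable (fun x => |F x|) (haarAddCircle.map (n k • ·)) := by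
      rw [(hmp k).map_eq]
      exact hF.aestronglyMeasurable.norm
    rw [← integral_map (hmp k).aemeasurable hFk, (hmp k).map_eq]
  have hdiff := tendsto_charFun_sub_of_sparse (X := fun k x => F (n k • x))
    (fun k => (hmp k).integrable_comp_of_integrable (hF.integrable one_le_two))
    hnorm hI hsparse t
  simpa only [sub_add_cancel, zero_add] using
    hdiff.add (tendsto_charFun_sum_dilates_of_nonResonant hF hmean hs hFs hI hsparse hres t)

end CircleCLT

section BoundedVariation

variable {E : Type*} [NormedAddCommGroup E]

lemma memLp_restrict_of_boundedVariationOn {f : ℝ → E} {S : Set ℝ} {μ : Measure ℝ}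
    [IsFiniteMeasure (μ.restrict S)] (hS : MeasurableSet S)
    (hf : AEStronglyMeasurable f (μ.restrict S)) (hbv : BoundedVariationOn f S) (p : ℝ≥0∞) :
    MemLp f p (μ.restrict S) := by
  obtain rfl | ⟨a, ha⟩ := S.eq_empty_or_nonempty
  · simp
  refine .of_bound hf (‖f a‖ + (eVariationOn f S).toReal) ?_
  filter_upwards [ae_restrict_mem hS] with x hx
  calc ‖f x‖ ≤ ‖f a‖ + ‖f x - f a‖ := norm_le_insert' _ _
    _ ≤ ‖f a‖ + (eVariationOn f S).toReal := by
      rw [← dist_eq_norm]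
      gcongr
      exact hbv.dist_le hx ha

lemma summable_abs_rpow_mul_norm_sq {c : ℤ → E} {C s : ℝ} (hc : ∀ j ≠ 0, ‖c j‖ ≤ C / |(j : ℝ)|)
    (hs₀ : 0 < s) (hs : s < 1 / 2) :
    Summable fun j : ℤ => |(j : ℝ)| ^ (2 * s) * ‖c j‖ ^ 2 := by
  refine .of_nonneg_of_le (fun j => by positivity) (fun j => ?_)
    ((summable_abs_int_rpow (b := 2 - 2 * s) (by linarith)).mul_left (C ^ 2))
  obtain rfl | hj := eq_or_ne j 0
  · simp only [Int.cast_zero, abs_zero, zero_rpow (by positivity : 2 * s ≠ 0), zero_mul]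
    positivity
  have hj₀ : 0 < |(j : ℝ)| := abs_pos.2 (Int.cast_ne_zero.2 hj)
  calc |(j : ℝ)| ^ (2 * s) * ‖c j‖ ^ 2
      ≤ |(j : ℝ)| ^ (2 * s) * (C / |(j : ℝ)|) ^ 2 := by
        gcongr
        exact hc j hj
    _ = C ^ 2 * |(j : ℝ)| ^ (-(2 - 2 * s)) := by
        rw [neg_sub, rpow_sub hj₀, rpow_two, div_pow]
        ring

lemma integral_eq_zero_of_antiperiodic [NormedSpace ℝ E] {g : ℝ → E} {c : ℝ} (hg : Continuous g)
    (hc : Function.Antiperiodic g c) (a : ℝ) : ∫ x in a..a + 2 * c, g x = 0 := by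
  have hshift : ∫ x in a + c..a + 2 * c, g x = -∫ x in a..a + c, g x := by
    rw [show a + 2 * c = a + c + c by ring, ← intervalIntegral.integral_comp_add_right,
      ← intervalIntegral.integral_neg]
    exact intervalIntegral.integral_congr fun x _ => hc x
  rw [← intervalIntegral.integral_add_adjacent_intervals (hg.intervalIntegrable a (a + c))
    (hg.intervalIntegrable _ _), hshift, add_neg_cancel]

lemma antiperiodic_fourier_coe {T : ℝ} (hT : 0 < T) {j : ℤ} (hj : j ≠ 0) :
    Function.Antiperiodic (fun x : ℝ => fourier j (x : AddCircle T)) (T / 2 / |(j : ℝ)|) := by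
  have h : Function.Antiperiodic (fun x : ℝ => fourier j (x : AddCircle T)) (T / 2 / j) :=
    fun x => by simpa only [coe_add] using fourier_add_half_inv_index hj hT x
  rcases abs_cases (j : ℝ) with ⟨habs, -⟩ | ⟨habs, -⟩
  · rwa [habs]
  · rw [habs, div_neg]
    exact h.neg

variable [NormedSpace ℂ E] {a b : ℝ} {f : ℝ → E} {g : ℝ → ℂ}

lemma norm_integral_smul_le_of_integral_eq_zero [CompleteSpace E] (hab : a ≤ b)
    (hf : IntervalIntegrable f volume a b) (hbv : BoundedVariationOn f (Set.Icc a b))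
    (hg : Continuous g) (hg₁ : ∀ x, ‖g x‖ ≤ 1) (hg₀ : ∫ x in a..b, g x = 0) :
    ‖∫ x in a..b, g x • f x‖ ≤ (eVariationOn f (Set.Icc a b)).toReal * (b - a) := by
  have hcenter : ∫ x in a..b, g x • f x = ∫ x in a..b, g x • (f x - f a) := by
    have hconst : IntervalIntegrable (fun x => g x • f a) volume a b :=
      (hg.smul continuous_const).intervalIntegrable a b
    simp only [smul_sub]
    rw [intervalIntegral.integral_sub (hf.continuousOn_smul hg.continuousOn) hconst,
      intervalIntegral.integral_smul_const, hg₀, zero_smul, sub_zero]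
  rw [hcenter, ← abs_of_nonneg (sub_nonneg.2 hab)]
  refine intervalIntegral.norm_integral_le_of_norm_le_const fun x hx => ?_
  rw [Set.uIoc_of_le hab] at hx
  calc ‖g x • (f x - f a)‖ ≤ 1 * dist (f x) (f a) := by
        rw [norm_smul, dist_eq_norm]
        gcongr
        exact hg₁ x
    _ ≤ (eVariationOn f (Set.Icc a b)).toReal := by
        rw [one_mul]
        exact hbv.dist_le ⟨hx.1.le, hx.2⟩ (Set.left_mem_Icc.2 hab)

lemma norm_integral_smul_le_of_antiperiodic [CompleteSpace E] {c : ℝ} {m : ℕ} (hc : 0 ≤ c)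
    (hb : b = a + m * (2 * c)) (hf : IntervalIntegrable f volume a b)
    (hbv : BoundedVariationOn f (Set.Icc a b)) (hg : Continuous g) (hg₁ : ∀ x, ‖g x‖ ≤ 1)
    (hgc : Function.Antiperiodic g c) :
    ‖∫ x in a..b, g x • f x‖ ≤ (eVariationOn f (Set.Icc a b)).toReal * (2 * c) := by
  set u : ℕ → ℝ := fun l => a + l * (2 * c) with hu
  have hu_succ (l : ℕ) : u (l + 1) = u l + 2 * c := by
    simp only [hu]
    push_cast
    ring
  have hu_mono : Monotone u := monotone_nat_of_le_succ fun l => by rw [hu_succ]; linarith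
  have hu₀ : u 0 = a := by simp [hu]
  have hum : u m = b := hb.symm
  have hsub {l : ℕ} (hl : l < m) : Set.Icc (u l) (u (l + 1)) ⊆ Set.Icc a b := by
    rw [← hu₀, ← hum]
    exact Set.Icc_subset_Icc (hu_mono l.zero_le) (hu_mono hl)
  have hf_sub {l : ℕ} (hl : l < m) : IntervalIntegrable f volume (u l) (u (l + 1)) :=
    hf.mono_set (by
      rw [Set.uIcc_of_le (hu_mono l.le_succ), Set.uIcc_of_le (hu₀ ▸ hum ▸ hu_mono m.zero_le)]
      exact hsub hl)
  calc ‖∫ x in a..b, g x • f x‖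
      = ‖∑ l ∈ Finset.range m, ∫ x in u l..u (l + 1), g x • f x‖ := by
        rw [intervalIntegral.sum_integral_adjacent_intervals fun l hl =>
          (hf_sub hl).continuousOn_smul hg.continuousOn, hu₀, hum]
    _ ≤ ∑ l ∈ Finset.range m, (eVariationOn f (Set.Icc (u l) (u (l + 1)))).toReal * (2 * c) := by
        refine norm_sum_le_of_le _ fun l hl => ?_
        have hl := Finset.mem_range.1 hl
        simpa only [hu_succ, add_sub_cancel_left] using
          norm_integral_smul_le_of_integral_eq_zero (hu_mono l.le_succ) (hf_sub hl)
            (hbv.mono (hsub hl)) hg hg₁ (hu_succ l ▸ integral_eq_zero_of_antiperiodic hg hgc _)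
    _ = (eVariationOn f (Set.Icc a b)).toReal * (2 * c) := by
        rw [← Finset.sum_mul, ← ENNReal.toReal_sum fun l hl =>
          hbv.mono (hsub (Finset.mem_range.1 hl)), eVariationOn.sum' f hu_mono, hu₀, hum]

theorem norm_fourierCoeffOn_le_of_boundedVariationOn [CompleteSpace E] (hab : a < b)
    (hf : IntervalIntegrable f volume a b) (hbv : BoundedVariationOn f (Set.Icc a b))
    {j : ℤ} (hj : j ≠ 0) :
    ‖fourierCoeffOn hab f j‖ ≤ (eVariationOn f (Set.Icc a b)).toReal / |(j : ℝ)| := by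
  have hlen : 0 < b - a := sub_pos.2 hab
  have hj₀ : |(j : ℝ)| ≠ 0 := abs_ne_zero.2 (Int.cast_ne_zero.2 hj)
  have hanti := antiperiodic_fourier_coe hlen (neg_ne_zero.2 hj)
  rw [Int.cast_neg, abs_neg] at hanti
  have hb : b = a + j.natAbs * (2 * ((b - a) / 2 / |(j : ℝ)|)) := by
    rw [Nat.cast_natAbs, Int.cast_abs]
    field_simp
    ring
  rw [fourierCoeffOn_eq_integral, norm_smul, Real.norm_of_nonneg (by positivity)]
  calc 1 / (b - a) * ‖∫ x in a..b, fourier (-j) (x : AddCircle (b - a)) • f x‖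
      ≤ 1 / (b - a) *
          ((eVariationOn f (Set.Icc a b)).toReal * (2 * ((b - a) / 2 / |(j : ℝ)|))) := by
        gcongr
        exact norm_integral_smul_le_of_antiperiodic (by positivity) hb hf hbv
          ((fourier (-j)).continuous.comp (AddCircle.continuous_mk' _))
          (fun x => (congrArg norm fourier_apply).trans_le (Circle.norm_coe _).le) hanti
    _ = (eVariationOn f (Set.Icc a b)).toReal / |(j : ℝ)| := by field_simp

lemma summable_abs_rpow_mul_norm_sq_fourierCoeffOn {f : ℝ → ℝ} {s : ℝ} (hab : a < b)
    (hf : IntervalIntegrable f volume a b) (hbv : BoundedVariationOn f (Set.Icc a b))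
    (hs₀ : 0 < s) (hs : s < 1 / 2) :
    Summable fun j : ℤ =>
      |(j : ℝ)| ^ (2 * s) * ‖fourierCoeffOn hab (fun x => (f x : ℂ)) j‖ ^ 2 := by
  have hfc : IntervalIntegrable (fun x => (f x : ℂ)) volume a b := ⟨hf.1.ofReal, hf.2.ofReal⟩
  have hbvc : BoundedVariationOn (fun x => (f x : ℂ)) (Set.Icc a b) :=
    Complex.isometry_ofReal.lipschitz.comp_boundedVariationOn hbv
  exact summable_abs_rpow_mul_norm_sq
    (fun j hj => norm_fourierCoeffOn_le_of_boundedVariationOn hab hfc hbvc hj) hs₀ hs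

end BoundedVariation

section UnitInterval

lemma tendsto_integral_comp_of_tendsto_charFun {Ω : Type*} {mΩ : MeasurableSpace Ω} {μ : Measure Ω}
    [IsProbabilityMeasure μ] {X : ℕ → Ω → ℝ} (hX : ∀ N, AEMeasurable (X N) μ) {ν : Measure ℝ}
    [IsProbabilityMeasure ν]
    (h : ∀ t, Tendsto (fun N => charFun (μ.map (X N)) t) atTop (𝓝 (charFun ν t)))
    (g : BoundedContinuousFunction ℝ ℝ) :
    Tendsto (fun N => ∫ w, g (X N w) ∂μ) atTop (𝓝 (∫ y, g y ∂ν)) := by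
  have hlim := ProbabilityMeasure.tendsto_iff_forall_integral_tendsto.1
    (ProbabilityMeasure.tendsto_iff_tendsto_charFun
      (μ := fun N => ⟨μ.map (X N), Measure.isProbabilityMeasure_map (hX N)⟩)
      (μ₀ := ⟨ν, inferInstance⟩) |>.2 h) g
  simpa only [ProbabilityMeasure.coe_mk, integral_map (hX _) g.continuous.aestronglyMeasurable]
    using hlim

variable {T : ℝ} [hT : Fact (0 < T)]

lemma fourierCoeff_eq_fourierCoeffOn {E : Type*} [NormedAddCommGroup E] [NormedSpace ℂ E]
    (F : AddCircle T → E) (j : ℤ) :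
    fourierCoeff F j = fourierCoeffOn hT.out (fun x : ℝ => F x) j := by
  rw [fourierCoeff_eq_intervalIntegral F j 0, fourierCoeffOn_eq_integral, zero_add, sub_zero]

lemma memLp_haarAddCircle_of_comp_coe {F : AddCircle T → ℝ} {p : ℝ≥0∞} {a : ℝ}
    (hF : MemLp (fun x : ℝ => F x) p (volume.restrict (Set.Ioc a (a + T)))) :
    MemLp F p haarAddCircle := by
  have hlift : liftIoc T a (fun x : ℝ => (F x : ℂ)) = fun x => (F x : ℂ) :=
    funext fun _ => congrArg (fun y => (F y : ℂ)) coe_equivIoc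
  have hmem : MemLp (liftIoc T a fun x : ℝ => (F x : ℂ)) p haarAddCircle :=
    hF.ofReal.memLp_liftIoc.haarAddCircle
  rw [hlift] at hmem
  exact hmem.re

lemma integral_haarAddCircle_eq_intervalIntegral {E : Type*} [NormedAddCommGroup E]
    [NormedSpace ℝ E] (F : UnitAddCircle → E) :
    ∫ x, F x ∂haarAddCircle = ∫ x in (0 : ℝ)..1, F x := by
  rw [integral_haarAddCircle, inv_one, one_smul, ← AddCircle.intervalIntegral_preimage 1 0,
    zero_add]

end UnitInterval

theorem statement2_general {ω : ℕ → ℝ} (hω_top : Tendsto ω atTop atTop)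
    {n : ℕ → ℕ} (hn_pos : ∀ k, 0 < n k) (hn_inj : Function.Injective n) (hA : CondA ω n)
    {f : ℝ → ℝ} (hf_per : Function.Periodic f 1) (hf_int : ∫ x in (0 : ℝ)..1, f x = 0)
    (hf_mem : MemLp f 2 (volume.restrict (Set.Ioc 0 1))) {s : ℝ} (hs : 0 < s)
    (hf_sum : Summable fun j : ℤ =>
      |(j : ℝ)| ^ (2 * s) * ‖fourierCoeffOn zero_lt_one (fun x => (f x : ℂ)) j‖ ^ 2)
    (g : BoundedContinuousFunction ℝ ℝ) :
    Tendsto (fun N : ℕ => ∫ x in Set.Ioo (0 : ℝ) 1, g ((∑ k ∈ Finset.range N, f (n k * x)) / √N))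
      atTop (𝓝 (∫ y, g y ∂gaussianReal 0 (∫ x in (0 : ℝ)..1, f x ^ 2).toNNReal)) := by
  have (k : ℕ) : NeZero (n k) := ⟨(hn_pos k).ne'⟩
  have hF := memLp_haarAddCircle_of_comp_coe (F := hf_per.lift) (a := 0)
    (by simpa only [zero_add] using! hf_mem)
  have hCLT := tendsto_integral_comp_of_tendsto_charFun
    (fun N : ℕ => aemeasurable_mul_sum_dilates (n := n) hF.aemeasurable (Finset.range N) (√N)⁻¹)
    (tendsto_charFun_sum_dilates hF
      (by simpa only [integral_haarAddCircle_eq_intervalIntegral] using! hf_int) hs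
      (by simpa only [fourierCoeff_eq_fourierCoeffOn] using! hf_sum)
      (goodIndices_subset n) (tendsto_card_sdiff_goodIndices_div_sqrt hn_inj)
      (hA.eventually_nonResonant hω_top)) g
  simpa only [integral_haarAddCircle_eq_intervalIntegral, ← coe_nsmul, hf_per.lift_coe,
    nsmul_eq_mul, inv_mul_eq_div, intervalIntegral.integral_of_le zero_le_one,
    integral_Ioc_eq_integral_Ioo] using hCLT

/-- Theorem 2 (CLT part of Theorem 1 of the paper): under Condition `A_ω`, for every `f` of
bounded variation, 1-periodic and of mean zero, `N^{-1/2} ∑_{k<N} f(n_k x)` converges in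
distribution (for `x` uniform on `(0,1)`) to the Gaussian law with mean `0` and
variance `‖f‖² = ∫₀¹ f²`. -/
theorem statement2
    (ω : ℕ → ℝ) (hω_pos : ∀ k, 0 < ω k) (hω_mono : Monotone ω)
    (hω_top : Tendsto ω atTop atTop)
    (n : ℕ → ℕ) (hn_pos : ∀ k, 0 < n k) (hn_inj : Function.Injective n)
    (hA : CondA ω n)
    (f : ℝ → ℝ) (hf_meas : Measurable f)
    (hf_per : ∀ x, f (x + 1) = f x)
    (hf_int : ∫ x in (0:ℝ)..1, f x = 0)
    (hf_bv : BoundedVariationOn f (Set.Icc 0 1)) :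
    ∀ g : BoundedContinuousFunction ℝ ℝ,
      Tendsto (fun N : ℕ => ∫ x in Set.Ioo (0:ℝ) 1,
          g ((∑ k ∈ Finset.range N, f (n k * x)) / Real.sqrt N))
        atTop
        (𝓝 (∫ y, g y ∂(ProbabilityTheory.gaussianReal 0
            (Real.toNNReal (∫ x in (0:ℝ)..1, f x ^ 2))))) := by
  have hf_mem := memLp_restrict_of_boundedVariationOn measurableSet_Ioc
    hf_meas.aestronglyMeasurable (hf_bv.mono Set.Ioc_subset_Icc_self) (μ := volume) 2
  have hf_sum := summable_abs_rpow_mul_norm_sq_fourierCoeffOn (s := 1 / 4) zero_lt_one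
    ((intervalIntegrable_iff_integrableOn_Ioc_of_le zero_le_one).2 (hf_mem.integrable one_le_two))
    hf_bv (by norm_num) (by norm_num)
  exact statement2_general hω_top hn_pos hn_inj hA hf_per hf_int hf_mem (by norm_num) hf_sum
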